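/- arXiv:2212.14826 — 2 statements merged into one kernel-verified Lean document; each statement's English description precedes it below -/
import Mathlib

section
/- Let Λ ≥ 1 and a > 0, and let ū, v̄ be C² functions on S²∖{N,S} such that ū + ln sinθ extends to S² with |ū + ln sinθ| ≤ Λ, the equations Δ_{g₀}ū = 2e^{4ū}|∇_{g₀}v̄|² and Δ_{g₀}v̄ = −4∇_{g₀}ū·∇_{g₀}v̄ hold on S²∖{N,S}, ∫_{S²} ( |∇_{g₀}(ū + ln sinθ)|² + e^{4ū}|∇_{g₀}v̄|² ) dvol_{g₀} < ∞, and v̄ extends continuously to the poles with v̄(N) = a and v̄(S) = −a. Then there exists a constant b ∈ (−1,1) such that ū = u_{a,b} and v̄ = v_{a,b}; in particular ū and v̄ are axisymmetric (independent of φ). -/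
open Real MeasureTheory Set Filter

noncomputable section

/-- `θ`-partial derivative of a function of `(θ, φ)`. -/
def pdθ (f : ℝ → ℝ → ℝ) : ℝ → ℝ → ℝ := fun θ φ => deriv (fun x => f x φ) θ

/-- `φ`-partial derivative of a function of `(θ, φ)`. -/
def pdφ (f : ℝ → ℝ → ℝ) : ℝ → ℝ → ℝ := fun θ φ => deriv (fun x => f θ x) φ

/-- coordinate derivative in direction `i` (`0 = θ`, `1 = φ`). -/
def pder2 (i : Fin 2) : (ℝ → ℝ → ℝ) → (ℝ → ℝ → ℝ) := if i = 0 then pdθ else pdφ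

/-- Christoffel symbols `Γ^m_{i j}` of the round metric on `S²` in `(θ, φ)`. -/
def christoffel (m i j : Fin 2) (θ : ℝ) : ℝ :=
  if m = 0 ∧ i = 1 ∧ j = 1 then -(Real.sin θ * Real.cos θ)
  else if m = 1 ∧ ((i = 0 ∧ j = 1) ∨ (i = 1 ∧ j = 0)) then Real.cos θ / Real.sin θ
  else 0

/-- covariant derivative (in the round metric) of a `k`-tensor on `S²`,
given by its coordinate components. -/
def covDer {k : ℕ} (T : (Fin k → Fin 2) → ℝ → ℝ → ℝ) :
    (Fin (k + 1) → Fin 2) → ℝ → ℝ → ℝ := fun I θ φ =>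
  pder2 (I 0) (T fun j => I j.succ) θ φ
    - ∑ j : Fin k, ∑ m : Fin 2,
        christoffel m (I 0) (I j.succ) θ *
          T (Function.update (fun j' => I j'.succ) j m) θ φ

/-- the `k`-th covariant derivative of a function on `S²`. -/
def covIter (f : ℝ → ℝ → ℝ) : (k : ℕ) → (Fin k → Fin 2) → ℝ → ℝ → ℝ
  | 0 => fun _ => f
  | k + 1 => covDer (covIter f k)

/-- inverse-metric weight used to compute tensor norms. -/
def sphWeight (i : Fin 2) (θ : ℝ) : ℝ := if i = 0 then 1 else (Real.sin θ ^ 2)⁻¹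

/-- `|∇_{g₀}^k f|`, the norm of the `k`-th covariant derivative in the round metric. -/
def covNorm (k : ℕ) (f : ℝ → ℝ → ℝ) (θ φ : ℝ) : ℝ :=
  Real.sqrt (∑ I : Fin k → Fin 2, (∏ j, sphWeight (I j) θ) * (covIter f k I θ φ) ^ 2)

/-- `∇_{g₀}f·∇_{g₀}h` on the round sphere. -/
def gradDotS2 (f g : ℝ → ℝ → ℝ) (θ φ : ℝ) : ℝ :=
  pdθ f θ φ * pdθ g θ φ + (Real.sin θ ^ 2)⁻¹ * pdφ f θ φ * pdφ g θ φ

/-- `|∇_{g₀}f|²` on the round sphere. -/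
def gradNormSqS2 (f : ℝ → ℝ → ℝ) (θ φ : ℝ) : ℝ := gradDotS2 f f θ φ

/-- `Δ_{g₀}f`, the round Laplacian in coordinates. -/
def lapS2 (f : ℝ → ℝ → ℝ) (θ φ : ℝ) : ℝ :=
  pdθ (pdθ f) θ φ + (Real.cos θ / Real.sin θ) * pdθ f θ φ +
    (Real.sin θ ^ 2)⁻¹ * pdφ (pdφ f) θ φ

/-- integral over `S²` with respect to `dvol_{g₀} = sinθ dθ dφ`. -/
def sphInt (f : ℝ → ℝ → ℝ) : ℝ :=
  ∫ θ in Ioo (0 : ℝ) π, (∫ φ in Ioo (0 : ℝ) (2 * π), f θ φ) * Real.sin θ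

/-- round distance between the points with coordinates `(θ, φ)` and `(θ', φ')`. -/
def sDist (θ φ θ' φ' : ℝ) : ℝ :=
  Real.arccos (Real.cos θ * Real.cos θ' + Real.sin θ * Real.sin θ' * Real.cos (φ - φ'))

/-- a function on `S²` (in coordinates), of class `C^k`, with bounded covariant
derivatives up to order `k`. -/
def CkSphere (k : ℕ) (f : ℝ → ℝ → ℝ) : Prop :=
  ContDiffOn ℝ k (fun p : ℝ × ℝ => f p.1 p.2) (Ioo 0 π ×ˢ (univ : Set ℝ)) ∧
  (∀ θ φ : ℝ, f θ (φ + 2 * π) = f θ φ) ∧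
  ∃ C : ℝ, ∀ j ≤ k, ∀ θ ∈ Ioo (0 : ℝ) π, ∀ φ : ℝ, covNorm j f θ φ ≤ C

/-- a smooth function on `S²` (in coordinates), with bounded covariant derivatives
of all orders. -/
def SmoothSphere (f : ℝ → ℝ → ℝ) : Prop :=
  ContDiffOn ℝ (⊤ : ℕ∞) (fun p : ℝ × ℝ => f p.1 p.2) (Ioo 0 π ×ˢ (univ : Set ℝ)) ∧
  (∀ θ φ : ℝ, f θ (φ + 2 * π) = f θ φ) ∧
  ∀ j : ℕ, ∃ C : ℝ, ∀ θ ∈ Ioo (0 : ℝ) π, ∀ φ : ℝ, covNorm j f θ φ ≤ C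
/-- Euclidean 3-space. -/
abbrev E3 := EuclideanSpace ℝ (Fin 3)

/-- the `i`-th standard basis vector. -/
def e3 (i : Fin 3) : E3 := EuclideanSpace.single i 1

/-- partial derivative in the `i`-th coordinate direction. -/
def pd3 (i : Fin 3) (f : E3 → ℝ) (x : E3) : ℝ := fderiv ℝ f x (e3 i)

/-- the Euclidean Laplacian `Δf`. -/
def lap3 (f : E3 → ℝ) (x : E3) : ℝ := ∑ i : Fin 3, pd3 i (fun y => pd3 i f y) x

/-- the Euclidean inner product of gradients, `∇f·∇g`. -/
def dot3 (f g : E3 → ℝ) (x : E3) : ℝ := ∑ i : Fin 3, pd3 i f x * pd3 i g x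

/-- the `z`-axis `Γ ⊆ ℝ³`. -/
def axisΓ : Set E3 := {x : E3 | x 0 = 0 ∧ x 1 = 0}

/-- the open unit ball `B₁ ⊆ ℝ³`. -/
def B1 : Set E3 := Metric.ball (0 : E3) 1

/-- the cylindrical radius `ρ = √(x₀² + x₁²)`. -/
def ρc (x : E3) : ℝ := Real.sqrt ((x 0) ^ 2 + (x 1) ^ 2)

/-- the point with spherical coordinates `(r, θ, φ)`. -/
def sph (r θ φ : ℝ) : E3 :=
  (EuclideanSpace.equiv (Fin 3) ℝ).symm
    ![r * Real.sin θ * Real.cos φ, r * Real.sin θ * Real.sin φ, r * Real.cos θ]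

/-- the point with cylindrical coordinates `(ρ, 0, z)`. -/
def cylPt (ρ z : ℝ) : E3 := (EuclideanSpace.equiv (Fin 3) ℝ).symm ![ρ, 0, z]

/-- the radial operator `r∂_r` on functions of spherical coordinates. -/
def Dr (F : ℝ → ℝ → ℝ → ℝ) : ℝ → ℝ → ℝ → ℝ :=
  fun r θ φ => r * deriv (fun s => F s θ φ) r

/-- `ρ`-partial derivative of a function of `(ρ, z)`. -/
def dρ (f : ℝ → ℝ → ℝ) (ρ z : ℝ) : ℝ := deriv (fun s => f s z) ρ

/-- `z`-partial derivative of a function of `(ρ, z)`. -/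
def dz (f : ℝ → ℝ → ℝ) (ρ z : ℝ) : ℝ := deriv (fun s => f ρ s) z

/-- a harmonic map `(u,v) : Ω → ℍ²` (horospherical coordinates, curvature `−2`). -/
def HarmonicPair (u v : E3 → ℝ) (Ω : Set E3) : Prop :=
  ContDiffOn ℝ 3 u Ω ∧ ContDiffOn ℝ 3 v Ω ∧
  ∀ x ∈ Ω, lap3 u x = 2 * Real.exp (4 * u x) * dot3 v v x ∧
    lap3 v x = -4 * dot3 u v x

/-- `f` is `C^{3,α}` on `s`: it is `C³` there and its third derivatives are
`α`-Hölder on compact subsets. -/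
def C3HolderOn (α : ℝ) (f : E3 → ℝ) (s : Set E3) : Prop :=
  ContDiffOn ℝ 3 f s ∧
  ∀ K : Set E3, K ⊆ s → IsCompact K →
    ∃ C : NNReal, HolderOnWith C α.toNNReal (iteratedFDerivWithin ℝ 3 f s) K

/-- `(f, plus its singular part) ∈ C^{3,α}(S²)` in coordinates: `C³` with bounded
covariant derivatives, `2π`-periodic in `φ`, and third covariant derivative
`α`-Hölder (componentwise) with respect to the round distance. -/
def SphHolder3 (α : ℝ) (f : ℝ → ℝ → ℝ) : Prop :=
  ContDiffOn ℝ 3 (fun p : ℝ × ℝ => f p.1 p.2) (Ioo 0 π ×ˢ (univ : Set ℝ)) ∧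
  (∀ θ φ : ℝ, f θ (φ + 2 * π) = f θ φ) ∧
  ∃ C : ℝ, (∀ k ≤ 3, ∀ θ ∈ Ioo (0 : ℝ) π, ∀ φ : ℝ, covNorm k f θ φ ≤ C) ∧
    ∀ I : Fin 3 → Fin 2, ∀ θ ∈ Ioo (0 : ℝ) π, ∀ θ' ∈ Ioo (0 : ℝ) π, ∀ φ φ' : ℝ,
      |covIter f 3 I θ φ - covIter f 3 I θ' φ'| ≤ C * sDist θ φ θ' φ' ^ α

/-- the extreme-Kerr-type geodesic `u_{a,b}`. -/
def uab (a b θ : ℝ) : ℝ :=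
  -Real.log (Real.sin θ) -
    (1 / 2) * Real.log (2 * a * Real.sqrt (1 - b ^ 2) /
      (1 + Real.cos θ ^ 2 + 2 * b * Real.cos θ))

/-- the extreme-Kerr-type geodesic `v_{a,b}`. -/
def vab (a b θ : ℝ) : ℝ :=
  a * (b + b * Real.cos θ ^ 2 + 2 * Real.cos θ) /
    (1 + Real.cos θ ^ 2 + 2 * b * Real.cos θ)

/-!
In the Mercator coordinate `s`, where `θ = 2 arctan eˢ`, the punctured sphere is conformal to a flat
cylinder, and `Φ = (u, v)` becomes a harmonic map from that cylinder into the plane with the metric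
`du² + e⁴ᵘ dv²` of constant curvature `-4`. Let `d` be the distance between `Φ` and its composition
with a rotation of the cylinder. Since the target is negatively curved, `cosh (2 d) - 1` is
subharmonic, so its integral over the circle at height `s` is a convex function of `s`. As `u` stays
within bounded distance of `log (cosh s)`, this integral is controlled by the energy of the loop
`Φ (s, ·)`, which is integrable in `s`. A convex nonnegative function that gets arbitrarily small at
both ends vanishes, so `Φ` is axisymmetric, that is, a geodesic of the target. Conservation of
momentum and of speed, the growth of `u` and the limits `±a` of `v` then determine it up to `b`.
-/

open scoped Topology

theorem eq_of_hasDerivAt_zero {f : ℝ → ℝ} (hf : ∀ s, HasDerivAt f 0 s) (x y : ℝ) : f x = f y :=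
  is_const_of_deriv_eq_zero (fun s => (hf s).differentiableAt) (fun s => (hf s).deriv) x y

theorem frequently_lt_of_integrable {α : Type*} [MeasurableSpace α] {μ : Measure α} {l : Filter α}
    (hl : ∀ s ∈ l, μ s = ⊤) {f : α → ℝ} (hf : Integrable f μ) {ε : ℝ} (hε : 0 < ε) :
    ∃ᶠ x in l, f x < ε := by
  intro h
  have hmem : {x | ε ≤ f x} ∈ l := h.mono fun _ hx => not_lt.1 hx
  exact (hf.measure_ge_lt_top hε).ne (hl _ hmem)

theorem volume_eq_top_of_mem_atTop {s : Set ℝ} (hs : s ∈ (atTop : Filter ℝ)) : volume s = ⊤ := by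
  obtain ⟨a, ha⟩ := mem_atTop_sets.1 hs
  exact measure_mono_top (s₁ := Ici a) ha volume_Ici

theorem volume_eq_top_of_mem_atBot {s : Set ℝ} (hs : s ∈ (atBot : Filter ℝ)) : volume s = ⊤ := by
  obtain ⟨a, ha⟩ := mem_atBot_sets.1 hs
  exact measure_mono_top (s₁ := Iic a) ha volume_Iic

theorem le_of_convexOn_of_frequently_lt {f : ℝ → ℝ} {c : ℝ} (hf : ConvexOn ℝ univ f)
    (hbot : ∀ ε > c, ∃ᶠ x in atBot, f x < ε) (htop : ∀ ε > c, ∃ᶠ x in atTop, f x < ε) (x : ℝ) :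
    f x ≤ c := by
  refine le_of_forall_gt fun ε hε => ?_
  obtain ⟨y, hyx, hy⟩ := frequently_atBot.1 (hbot ε hε) x
  obtain ⟨z, hxz, hz⟩ := frequently_atTop.1 (htop ε hε) x
  exact (hf.le_max_of_mem_Icc (mem_univ y) (mem_univ z) ⟨hyx, hxz⟩).trans_lt (max_lt hy hz)

theorem sq_integral_le_sub_mul_integral_sq {f : ℝ → ℝ} (hf : Continuous f) {a b : ℝ}
    (hab : a ≤ b) : (∫ t in a..b, f t) ^ 2 ≤ (b - a) * ∫ t in a..b, f t ^ 2 := by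
  rcases hab.eq_or_lt with rfl | hlt
  · simp
  have hJensen : (⨍ t in Ioc a b, f t) ^ 2 ≤ ⨍ t in Ioc a b, f t ^ 2 :=
    even_two.convexOn_pow.map_set_average_le (continuous_pow 2).continuousOn isClosed_univ
      (by simp [hlt]) measure_Ioc_lt_top.ne (by simp) (hf.integrableOn_Ioc)
      (hf.pow 2).integrableOn_Ioc
  have hpos : 0 < b - a := sub_pos.2 hlt
  simp only [← uIoc_of_le hab, interval_average_eq_div] at hJensen
  rw [div_pow, div_le_div_iff₀ (by positivity) hpos] at hJensen
  nlinarith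

theorem sq_sub_le_mul_integral_sq_deriv {f f' : ℝ → ℝ} {T : ℝ}
    (hf : ∀ x, HasDerivAt f (f' x) x) (hf' : Continuous f') {x y : ℝ}
    (hx : x ∈ Icc 0 T) (hy : y ∈ Icc 0 T) :
    (f x - f y) ^ 2 ≤ T * ∫ t in (0 : ℝ)..T, f' t ^ 2 := by
  wlog hyx : y ≤ x generalizing x y
  · rw [← neg_sq, neg_sub]
    exact this hy hx (le_of_not_ge hyx)
  have hint : ∀ a b, IntervalIntegrable (fun t => f' t ^ 2) volume a b :=
    (hf'.pow 2).intervalIntegrable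
  have hnonneg : 0 ≤ ∫ t in y..x, f' t ^ 2 :=
    intervalIntegral.integral_nonneg hyx fun t _ => sq_nonneg _
  calc (f x - f y) ^ 2 = (∫ t in y..x, f' t) ^ 2 := by
        rw [intervalIntegral.integral_eq_sub_of_hasDerivAt (fun t _ => hf t)
          (hf'.intervalIntegrable _ _)]
    _ ≤ (x - y) * ∫ t in y..x, f' t ^ 2 := sq_integral_le_sub_mul_integral_sq hf' hyx
    _ ≤ T * ∫ t in y..x, f' t ^ 2 := by gcongr; linarith [hx.2, hy.1]
    _ ≤ T * ∫ t in (0 : ℝ)..T, f' t ^ 2 := by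
        have hT : 0 ≤ T := hx.1.trans hx.2
        gcongr
        exact intervalIntegral.integral_mono_interval hy.1 hyx hx.2
          (Eventually.of_forall fun t => sq_nonneg _) (hint _ _)

theorem eq_zero_of_periodic_of_integral_nonpos {f : ℝ → ℝ} {T : ℝ} (hf : Continuous f)
    (hper : Function.Periodic f T) (hT : 0 < T) (hf₀ : ∀ t, 0 ≤ f t)
    (hint : ∫ t in (0 : ℝ)..T, f t ≤ 0) (t : ℝ) : f t = 0 := by
  obtain ⟨x, hx, hxt⟩ := hper.exists_mem_Ico₀ hT t
  by_contra hne
  exact hint.not_gt (intervalIntegral.integral_pos hT hf.continuousOn (fun t _ => hf₀ t)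
    ⟨x, Ico_subset_Icc_self hx, hxt ▸ (hf₀ t).lt_of_ne' hne⟩)

theorem cosh_sub_one_le (x : ℝ) : cosh x - 1 ≤ x ^ 2 / 2 * exp (x ^ 2 / 2) := by
  have hcosh := cosh_le_exp_half_sq x
  set d := x ^ 2 / 2
  have hexp : (1 - d) * exp d ≤ 1 := by
    calc (1 - d) * exp d ≤ exp (-d) * exp d := by gcongr; exact one_sub_le_exp_neg d
      _ = 1 := by rw [← exp_add, neg_add_cancel, exp_zero]
  linarith

theorem eq_zero_of_tendsto_deriv_of_bounded {f f' : ℝ → ℝ} {M l : ℝ}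
    (hf : ∀ s, HasDerivAt f (f' s) s) (hbdd : ∀ s, |f s| ≤ M) (hl : Tendsto f' atTop (𝓝 l)) :
    l = 0 := by
  have hmvt (x : ℝ) :
      ∃ y ∈ Ioo x (x + (|x| + 1)), f' y = (f (x + (|x| + 1)) - f x) / (|x| + 1) := by
    have hlt : x < x + (|x| + 1) := by linarith [abs_nonneg x]
    obtain ⟨y, hy, heq⟩ := exists_hasDerivAt_eq_slope f f' hlt
      (fun z _ => (hf z).continuousAt.continuousWithinAt) fun z _ => hf z
    exact ⟨y, hy, by rw [heq, add_sub_cancel_left]⟩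
  choose y hy hslope using hmvt
  have hyTop : Tendsto y atTop atTop := tendsto_atTop_mono (fun x => (hy x).1.le) tendsto_id
  have hzero : Tendsto (fun x => 2 * M / (|x| + 1)) atTop (𝓝 0) :=
    (tendsto_atTop_add_const_right _ 1 tendsto_abs_atTop_atTop).const_div_atTop _
  refine tendsto_nhds_unique (hl.comp hyTop) (squeeze_zero_norm (fun x => ?_) hzero)
  rw [Function.comp_apply, hslope, norm_eq_abs, abs_div, abs_of_pos (a := |x| + 1) (by positivity)]
  gcongr
  exact (abs_sub _ _).trans (by linarith [hbdd x, hbdd (x + (|x| + 1))])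

theorem eq_cosh_sinh_of_hasDerivAt {x y : ℝ → ℝ} {k : ℝ}
    (hx : ∀ s, HasDerivAt x (k * y s) s) (hy : ∀ s, HasDerivAt y (k * x s) s) (s : ℝ) :
    x s = x 0 * cosh (k * s) + y 0 * sinh (k * s) ∧
      y s = y 0 * cosh (k * s) + x 0 * sinh (k * s) := by
  have hcosh (s : ℝ) : HasDerivAt (fun s => cosh (k * s)) (sinh (k * s) * k) s := by
    simpa using ((hasDerivAt_id s).const_mul k).cosh
  have hsinh (s : ℝ) : HasDerivAt (fun s => sinh (k * s)) (cosh (k * s) * k) s := by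
    simpa using ((hasDerivAt_id s).const_mul k).sinh
  have hfst : x s * cosh (k * s) - y s * sinh (k * s) = x 0 := by
    simpa using eq_of_hasDerivAt_zero (fun s =>
      (((hx s).mul (hcosh s)).sub ((hy s).mul (hsinh s))).congr_deriv (by ring)) s 0
  have hsnd : y s * cosh (k * s) - x s * sinh (k * s) = y 0 := by
    simpa using eq_of_hasDerivAt_zero (fun s =>
      (((hy s).mul (hcosh s)).sub ((hx s).mul (hsinh s))).congr_deriv (by ring)) s 0
  have hsq := cosh_sq (k * s)
  constructor
  · linear_combination cosh (k * s) * hfst + sinh (k * s) * hsnd - x s * hsq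
  · linear_combination cosh (k * s) * hsnd + sinh (k * s) * hfst - y s * hsq

section DirDeriv

variable {V E : Type*} [NormedAddCommGroup V] [NormedSpace ℝ V]
  [NormedAddCommGroup E] [NormedSpace ℝ E] {F : V → E}

/-- The derivative of `F` in the constant direction `e`, as a function of the base point, so that
it can be iterated (`lineDeriv` takes the base point before the direction). -/
def dirDeriv (e : V) (F : V → E) : V → E := fun p => lineDeriv ℝ F p e

theorem dirDeriv_eq_of_hasDerivAt {e p : V} {f' : E}
    (h : HasDerivAt (fun r : ℝ => F (p + r • e)) f' 0) : dirDeriv e F p = f' :=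
  h.deriv

theorem dirDeriv_eq_fderiv (hF : Differentiable ℝ F) (e : V) :
    dirDeriv e F = fun p => fderiv ℝ F p e :=
  funext fun p => (hF p).lineDeriv_eq_fderiv

theorem hasDerivAt_comp_of_dirDeriv (hF : Differentiable ℝ F) {c : ℝ → V} {e : V} {x : ℝ}
    (hc : HasDerivAt c e x) : HasDerivAt (fun x => F (c x)) (dirDeriv e F (c x)) x := by
  rw [dirDeriv_eq_fderiv hF]
  exact (hF _).hasFDerivAt.comp_hasDerivAt x hc

theorem contDiff_dirDeriv (hF : ContDiff ℝ 2 F) (e : V) : ContDiff ℝ 1 (dirDeriv e F) := by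
  rw [dirDeriv_eq_fderiv (hF.differentiable two_ne_zero)]
  exact (hF.fderiv_right (m := 1) (by norm_num)).clm_apply contDiff_const

theorem continuous_dirDeriv (hF : ContDiff ℝ 1 F) (e : V) : Continuous (dirDeriv e F) := by
  rw [dirDeriv_eq_fderiv (hF.differentiable one_ne_zero)]
  exact (hF.continuous_fderiv one_ne_zero).clm_apply continuous_const

theorem dirDeriv_comp_add_right (F : V → E) (e w : V) :
    dirDeriv e (fun p => F (p + w)) = fun p => dirDeriv e F (p + w) := by
  funext p
  simp only [dirDeriv, lineDeriv, add_right_comm]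

theorem dirDeriv_prodMk {G : V → E} (hF : Differentiable ℝ F) (hG : Differentiable ℝ G) (e : V) :
    dirDeriv e (fun p => (F p, G p)) = fun p => (dirDeriv e F p, dirDeriv e G p) := by
  rw [dirDeriv_eq_fderiv hF, dirDeriv_eq_fderiv hG, dirDeriv_eq_fderiv (hF.prodMk hG)]
  funext p
  rw [(hF p).fderiv_prodMk (hG p), ContinuousLinearMap.prod_apply]

end DirDeriv

theorem hasDerivAt_fst {X : ℝ → ℝ × ℝ} {ξ : ℝ × ℝ} {x : ℝ} (hX : HasDerivAt X ξ x) :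
    HasDerivAt (fun x => (X x).1) ξ.1 x :=
  (hasFDerivAt_fst (𝕜 := ℝ) (p := X x)).comp_hasDerivAt x hX

theorem hasDerivAt_snd {X : ℝ → ℝ × ℝ} {ξ : ℝ × ℝ} {x : ℝ} (hX : HasDerivAt X ξ x) :
    HasDerivAt (fun x => (X x).2) ξ.2 x :=
  (hasFDerivAt_snd (𝕜 := ℝ) (p := X x)).comp_hasDerivAt x hX

/-- The squared length of a tangent vector `ξ` at `X = (u, v)` for the metric `du² + e⁴ᵘ dv²`
of curvature `-4`. -/
def hypNormSq (X ξ : ℝ × ℝ) : ℝ := ξ.1 ^ 2 + exp (4 * X.1) * ξ.2 ^ 2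

/-- The acceleration `-Γ(ξ, ξ)` of a geodesic of `du² + e⁴ᵘ dv²` through `X` with velocity `ξ`. -/
def geodAccel (X ξ : ℝ × ℝ) : ℝ × ℝ := (2 * exp (4 * X.1) * ξ.2 ^ 2, -4 * (ξ.1 * ξ.2))

/-- `cosh (2 d) - 1`, where `d` is the distance from `X` to `Y` for the metric
`du² + e⁴ᵘ dv²`. -/
def coshDistSubOne (X Y : ℝ × ℝ) : ℝ :=
  cosh (2 * (X.1 - Y.1)) - 1 + 2 * exp (2 * (X.1 + Y.1)) * (X.2 - Y.2) ^ 2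

/-- The differential of `coshDistSubOne` at `(X, Y)`, applied to the vector `(ξ, η)`. -/
def coshDistDiff (X Y ξ η : ℝ × ℝ) : ℝ :=
  2 * sinh (2 * (X.1 - Y.1)) * (ξ.1 - η.1)
    + 4 * exp (2 * (X.1 + Y.1)) * (X.2 - Y.2) * ((ξ.1 + η.1) * (X.2 - Y.2) + (ξ.2 - η.2))

/-- The second derivative, in the coordinates `(u, v)`, of `coshDistSubOne` at `(X, Y)`,
as a quadratic form in `(ξ, η)`. -/
def coshDistHess (X Y ξ η : ℝ × ℝ) : ℝ :=
  4 * cosh (2 * (X.1 - Y.1)) * (ξ.1 - η.1) ^ 2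
    + 4 * exp (2 * (X.1 + Y.1)) * (2 * (ξ.1 + η.1) ^ 2 * (X.2 - Y.2) ^ 2
      + 4 * (ξ.1 + η.1) * (X.2 - Y.2) * (ξ.2 - η.2) + (ξ.2 - η.2) ^ 2)

theorem coshDistSubOne_nonneg (X Y : ℝ × ℝ) : 0 ≤ coshDistSubOne X Y :=
  add_nonneg (sub_nonneg.2 (one_le_cosh _)) (by positivity)

theorem eq_of_coshDistSubOne_eq_zero {X Y : ℝ × ℝ} (h : coshDistSubOne X Y = 0) : X = Y := by
  have hcosh : 0 ≤ cosh (2 * (X.1 - Y.1)) - 1 := sub_nonneg.2 (one_le_cosh _)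
  have hexp : 0 ≤ 2 * exp (2 * (X.1 + Y.1)) * (X.2 - Y.2) ^ 2 := by positivity
  obtain ⟨h₁, h₂⟩ := (add_eq_zero_iff_of_nonneg hcosh hexp).1 h
  have hfst : X.1 - Y.1 = 0 := by
    by_contra hne
    exact (one_lt_cosh.2 (mul_ne_zero two_ne_zero hne)).ne' (sub_eq_zero.1 h₁)
  have hsnd : X.2 - Y.2 = 0 := by simpa [exp_ne_zero] using h₂
  exact Prod.ext (sub_eq_zero.1 hfst) (sub_eq_zero.1 hsnd)

theorem contDiff_coshDistSubOne {V : Type*} [NormedAddCommGroup V] [NormedSpace ℝ V]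
    {Φ Ψ : V → ℝ × ℝ} {n : WithTop ℕ∞} (hΦ : ContDiff ℝ n Φ) (hΨ : ContDiff ℝ n Ψ) :
    ContDiff ℝ n fun p => coshDistSubOne (Φ p) (Ψ p) := by
  unfold coshDistSubOne
  fun_prop

section Curves

variable {X Y : ℝ → ℝ × ℝ} {x : ℝ}

theorem hasDerivAt_coshDistSubOne {ξ η : ℝ × ℝ} (hX : HasDerivAt X ξ x) (hY : HasDerivAt Y η x) :
    HasDerivAt (fun x => coshDistSubOne (X x) (Y x)) (coshDistDiff (X x) (Y x) ξ η) x := by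
  have hsub := ((hasDerivAt_fst hX).fun_sub (hasDerivAt_fst hY)).const_mul 2
  have hadd := ((hasDerivAt_fst hX).fun_add (hasDerivAt_fst hY)).const_mul 2
  have hsq := ((hasDerivAt_snd hX).fun_sub (hasDerivAt_snd hY)).fun_pow 2
  refine ((hsub.cosh.sub_const 1).fun_add ((hadd.exp.const_mul 2).fun_mul hsq)).congr_deriv ?_
  rw [coshDistDiff]
  push_cast
  ring

theorem hasDerivAt_coshDistDiff {ξ η : ℝ → ℝ × ℝ} {ξ' η' : ℝ × ℝ} (hX : HasDerivAt X (ξ x) x)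
    (hY : HasDerivAt Y (η x) x) (hξ : HasDerivAt ξ ξ' x) (hη : HasDerivAt η η' x) :
    HasDerivAt (fun x => coshDistDiff (X x) (Y x) (ξ x) (η x))
      (coshDistHess (X x) (Y x) (ξ x) (η x) + coshDistDiff (X x) (Y x) ξ' η') x := by
  have hsub := ((hasDerivAt_fst hX).fun_sub (hasDerivAt_fst hY)).const_mul 2
  have hadd := ((hasDerivAt_fst hX).fun_add (hasDerivAt_fst hY)).const_mul 2
  have hsnd := (hasDerivAt_snd hX).fun_sub (hasDerivAt_snd hY)
  have hξη := (hasDerivAt_fst hξ).fun_add (hasDerivAt_fst hη)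
  have hleft :=
    (hsub.sinh.const_mul 2).fun_mul ((hasDerivAt_fst hξ).fun_sub (hasDerivAt_fst hη))
  have hright := ((hadd.exp.const_mul 4).fun_mul hsnd).fun_mul
    ((hξη.fun_mul hsnd).fun_add ((hasDerivAt_snd hξ).fun_sub (hasDerivAt_snd hη)))
  refine (hleft.fun_add hright).congr_deriv ?_
  simp only [coshDistHess, coshDistDiff]
  ring

end Curves

theorem coshDistDiff_add (X Y ξ η ξ' η' : ℝ × ℝ) :
    coshDistDiff X Y (ξ + ξ') (η + η') = coshDistDiff X Y ξ η + coshDistDiff X Y ξ' η' := by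
  simp only [coshDistDiff, Prod.fst_add, Prod.snd_add]
  ring

theorem coshDistHess_add_coshDistDiff_geodAccel_nonneg (X Y ξ η : ℝ × ℝ) :
    0 ≤ coshDistHess X Y ξ η + coshDistDiff X Y (geodAccel X ξ) (geodAccel Y η) := by
  obtain ⟨u, v⟩ := X
  obtain ⟨w, z⟩ := Y
  obtain ⟨p, r⟩ := ξ
  obtain ⟨q, t⟩ := η
  set k := exp (u - w)
  set g := exp (u + w)
  have hk : exp (2 * (u - w)) = k ^ 2 := by rw [← exp_nat_mul]; norm_num
  have hg : exp (2 * (u + w)) = g ^ 2 := by rw [← exp_nat_mul]; norm_num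
  have hu : exp (4 * u) = g ^ 2 * k ^ 2 := by rw [← hk, ← hg, ← exp_add]; ring_nf
  have hw : exp (4 * w) = g ^ 2 * (k ^ 2)⁻¹ := by
    rw [← hk, ← hg, ← exp_neg, ← exp_add]; ring_nf
  have hcosh : cosh (2 * (u - w)) = (k ^ 2 + (k ^ 2)⁻¹) / 2 := by rw [cosh_eq, exp_neg, hk]
  have hsinh : sinh (2 * (u - w)) = (k ^ 2 - (k ^ 2)⁻¹) / 2 := by rw [sinh_eq, exp_neg, hk]
  have hk0 : k ≠ 0 := exp_ne_zero _
  -- Nonpositive curvature of the target, in the form of an explicit sum of squares.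
  calc (0 : ℝ)
      ≤ 2 * ((2 * (v - z) * g * (p + q) + g * (r - t)) ^ 2
        + (k ^ 2 * g * r - k⁻¹ ^ 2 * g * t) ^ 2
        + (k⁻¹ * (p - q) - 2 * (v - z) * g ^ 2 * k * r) ^ 2
        + (k * (p - q) - 2 * (v - z) * g ^ 2 * k⁻¹ * t) ^ 2) := by positivity
    _ = _ := by
      simp only [coshDistHess, coshDistDiff, geodAccel, hcosh, hsinh, hg, hu, hw]
      field_simp
      ring

/-- The harmonic map equation, from the flat cylinder with coordinates `(s, t)` to the half-plane
with the metric `du² + e⁴ᵘ dv²`. -/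
def HarmonicCyl (Φ : ℝ × ℝ → ℝ × ℝ) : Prop :=
  ∀ p, dirDeriv (1, 0) (dirDeriv (1, 0) Φ) p + dirDeriv (0, 1) (dirDeriv (0, 1) Φ) p =
    geodAccel (Φ p) (dirDeriv (1, 0) Φ p) + geodAccel (Φ p) (dirDeriv (0, 1) Φ p)

theorem HarmonicCyl.comp_add_right {Φ : ℝ × ℝ → ℝ × ℝ} (hΦ : HarmonicCyl Φ) (w : ℝ × ℝ) :
    HarmonicCyl fun p => Φ (p + w) := fun p => by
  simpa only [dirDeriv_comp_add_right] using hΦ (p + w)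

theorem dirDeriv_dirDeriv_coshDistSubOne {V : Type*} [NormedAddCommGroup V] [NormedSpace ℝ V]
    {Φ Ψ : V → ℝ × ℝ} (hΦ : ContDiff ℝ 2 Φ) (hΨ : ContDiff ℝ 2 Ψ) (e p : V) :
    dirDeriv e (dirDeriv e fun p => coshDistSubOne (Φ p) (Ψ p)) p =
      coshDistHess (Φ p) (Ψ p) (dirDeriv e Φ p) (dirDeriv e Ψ p)
        + coshDistDiff (Φ p) (Ψ p) (dirDeriv e (dirDeriv e Φ) p)
          (dirDeriv e (dirDeriv e Ψ) p) := by
  have hline (q : V) : HasDerivAt (fun r : ℝ => q + r • e) e 0 := by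
    simpa using ((hasDerivAt_id (0 : ℝ)).smul_const e).const_add q
  have hcurve {G : V → ℝ × ℝ} (hG : Differentiable ℝ G) (q : V) :
      HasDerivAt (fun r : ℝ => G (q + r • e)) (dirDeriv e G (q + (0 : ℝ) • e)) 0 :=
    hasDerivAt_comp_of_dirDeriv hG (hline q)
  have hΦ₁ := hΦ.differentiable two_ne_zero
  have hΨ₁ := hΨ.differentiable two_ne_zero
  have hΦ₂ := (contDiff_dirDeriv hΦ e).differentiable one_ne_zero
  have hΨ₂ := (contDiff_dirDeriv hΨ e).differentiable one_ne_zero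
  have hfirst : (dirDeriv e fun p => coshDistSubOne (Φ p) (Ψ p)) = fun p =>
      coshDistDiff (Φ p) (Ψ p) (dirDeriv e Φ p) (dirDeriv e Ψ p) := funext fun q => by
    have h := hasDerivAt_coshDistSubOne (hcurve hΦ₁ q) (hcurve hΨ₁ q)
    rw [zero_smul, add_zero] at h
    exact dirDeriv_eq_of_hasDerivAt h
  have h := hasDerivAt_coshDistDiff (ξ := fun r : ℝ => dirDeriv e Φ (p + r • e))
    (η := fun r : ℝ => dirDeriv e Ψ (p + r • e)) (hcurve hΦ₁ p) (hcurve hΨ₁ p) (hcurve hΦ₂ p)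
    (hcurve hΨ₂ p)
  rw [zero_smul, add_zero] at h
  rw [hfirst]
  exact dirDeriv_eq_of_hasDerivAt h

theorem laplacian_coshDistSubOne_nonneg {Φ Ψ : ℝ × ℝ → ℝ × ℝ} (hΦ : ContDiff ℝ 2 Φ)
    (hΨ : ContDiff ℝ 2 Ψ) (hΦh : HarmonicCyl Φ) (hΨh : HarmonicCyl Ψ) (p : ℝ × ℝ) :
    0 ≤ dirDeriv (1, 0) (dirDeriv (1, 0) fun p => coshDistSubOne (Φ p) (Ψ p)) p
      + dirDeriv (0, 1) (dirDeriv (0, 1) fun p => coshDistSubOne (Φ p) (Ψ p)) p := by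
  have hconv (e : ℝ × ℝ) := coshDistHess_add_coshDistDiff_geodAccel_nonneg (Φ p) (Ψ p)
    (dirDeriv e Φ p) (dirDeriv e Ψ p)
  have htension := coshDistDiff_add (Φ p) (Ψ p) (dirDeriv (1, 0) (dirDeriv (1, 0) Φ) p)
    (dirDeriv (1, 0) (dirDeriv (1, 0) Ψ) p) (dirDeriv (0, 1) (dirDeriv (0, 1) Φ) p)
    (dirDeriv (0, 1) (dirDeriv (0, 1) Ψ) p)
  rw [hΦh p, hΨh p, coshDistDiff_add] at htension
  simp only [dirDeriv_dirDeriv_coshDistSubOne hΦ hΨ]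
  linarith [hconv (1, 0), hconv (0, 1)]

section Cylinder

variable {E : Type*} [NormedAddCommGroup E] [NormedSpace ℝ E] {F : ℝ × ℝ → E}

theorem hasDerivAt_dirDeriv_fst (hF : Differentiable ℝ F) (s t : ℝ) :
    HasDerivAt (fun s => F (s, t)) (dirDeriv (1, 0) F (s, t)) s :=
  hasDerivAt_comp_of_dirDeriv hF ((hasDerivAt_id s).prodMk (hasDerivAt_const s t))

theorem hasDerivAt_dirDeriv_snd (hF : Differentiable ℝ F) (s t : ℝ) :
    HasDerivAt (fun t => F (s, t)) (dirDeriv (0, 1) F (s, t)) t :=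
  hasDerivAt_comp_of_dirDeriv hF ((hasDerivAt_const t s).prodMk (hasDerivAt_id t))

theorem hasDerivAt_intervalIntegral_fst (hF : ContDiff ℝ 1 F) (a b s : ℝ) :
    HasDerivAt (fun s => ∫ t in a..b, F (s, t)) (∫ t in a..b, dirDeriv (1, 0) F (s, t)) s := by
  have hcont := hF.continuous
  have hcont' := continuous_dirDeriv hF (1, 0)
  obtain ⟨C, hC⟩ := ((isCompact_Icc (a := s - 1) (b := s + 1)).prod
    (isCompact_uIcc (a := a) (b := b))).exists_bound_of_continuousOn hcont'.continuousOn
  have hbound : IntervalIntegrable (fun _ => C) volume a b := intervalIntegrable_const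
  have hnhds : Icc (s - 1) (s + 1) ∈ 𝓝 s := Icc_mem_nhds (by linarith) (by linarith)
  refine (intervalIntegral.hasDerivAt_integral_of_dominated_loc_of_deriv_le
    (F' := fun s t => dirDeriv (1, 0) F (s, t)) hnhds ?_ ?_ ?_ ?_ hbound ?_).2
  · exact .of_forall fun x => Continuous.aestronglyMeasurable (by fun_prop)
  · exact Continuous.intervalIntegrable (by fun_prop) _ _
  · exact Continuous.aestronglyMeasurable (by fun_prop)
  · exact .of_forall fun t ht x hx => hC (x, t) ⟨hx, uIoc_subset_uIcc ht⟩
  · exact .of_forall fun t _ x _ =>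
      hasDerivAt_dirDeriv_fst (hF.differentiable one_ne_zero) x t

end Cylinder

theorem integral_dirDeriv_dirDeriv_snd_eq_zero {F : ℝ × ℝ → ℝ} (hF : ContDiff ℝ 2 F) {T : ℝ}
    (hper : ∀ p, F (p + (0, T)) = F p) (s : ℝ) :
    ∫ t in (0 : ℝ)..T, dirDeriv (0, 1) (dirDeriv (0, 1) F) (s, t) = 0 := by
  have hF₁ := contDiff_dirDeriv hF (0, 1)
  have hcont := continuous_dirDeriv hF₁ (0, 1)
  rw [intervalIntegral.integral_eq_sub_of_hasDerivAt
    (fun t _ => hasDerivAt_dirDeriv_snd (hF₁.differentiable one_ne_zero) s t)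
    (Continuous.intervalIntegrable (by fun_prop) _ _), sub_eq_zero]
  have hshift := congrFun (dirDeriv_comp_add_right F (0, 1) (0, T)) (s, 0)
  simp only [hper, Prod.mk_add_mk, add_zero, zero_add] at hshift
  exact hshift.symm

theorem convexOn_integral_of_laplacian_nonneg {F : ℝ × ℝ → ℝ} (hF : ContDiff ℝ 2 F) {T : ℝ}
    (hT : 0 ≤ T) (hper : ∀ p, F (p + (0, T)) = F p)
    (hsub : ∀ p, 0 ≤ dirDeriv (1, 0) (dirDeriv (1, 0) F) p
      + dirDeriv (0, 1) (dirDeriv (0, 1) F) p) :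
    ConvexOn ℝ univ fun s => ∫ t in (0 : ℝ)..T, F (s, t) := by
  have hF₁ := contDiff_dirDeriv hF (1, 0)
  have hderiv := hasDerivAt_intervalIntegral_fst (hF.of_le one_le_two) 0 T
  have hderiv₂ := hasDerivAt_intervalIntegral_fst hF₁ 0 T
  have hderiv_eq : deriv (fun s => ∫ t in (0 : ℝ)..T, F (s, t)) = _ :=
    funext fun s => (hderiv s).deriv
  refine convexOn_univ_of_deriv2_nonneg (fun s => (hderiv s).differentiableAt) ?_ fun s => ?_
  · rw [hderiv_eq]
    exact fun s => (hderiv₂ s).differentiableAt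
  · have hcont₁ := continuous_dirDeriv hF₁ (1, 0)
    have hcont₂ := continuous_dirDeriv (contDiff_dirDeriv hF (0, 1)) (0, 1)
    have hnonneg : 0 ≤ ∫ t in (0 : ℝ)..T, (dirDeriv (1, 0) (dirDeriv (1, 0) F) (s, t)
        + dirDeriv (0, 1) (dirDeriv (0, 1) F) (s, t)) :=
      intervalIntegral.integral_nonneg hT fun t _ => hsub (s, t)
    rw [intervalIntegral.integral_add (Continuous.intervalIntegrable (by fun_prop) _ _)
      (Continuous.intervalIntegrable (by fun_prop) _ _),
      integral_dirDeriv_dirDeriv_snd_eq_zero hF hper s, add_zero] at hnonneg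
    rwa [Function.iterate_succ_apply, Function.iterate_one, hderiv_eq, (hderiv₂ s).deriv]

section Oscillation

variable {f f' g g' : ℝ → ℝ} {T h Λ : ℝ} {x y : ℝ}

theorem cosh_two_mul_sub_sub_one_le (hf : ∀ x, HasDerivAt f (f' x) x) (hf' : Continuous f')
    (hb : ∀ x, |f x - h| ≤ Λ) (hx : x ∈ Icc 0 T) (hy : y ∈ Icc 0 T) :
    cosh (2 * (f x - f y)) - 1 ≤ 2 * T * exp (8 * Λ ^ 2) * ∫ t in (0 : ℝ)..T, f' t ^ 2 := by
  have hint := sq_sub_le_mul_integral_sq_deriv hf hf' hx hy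
  have hdiff : |f x - f y| ≤ 2 * Λ := by
    calc |f x - f y| = |(f x - h) - (f y - h)| := by ring_nf
      _ ≤ 2 * Λ := (abs_sub _ _).trans (by linarith [hb x, hb y])
  have hsq : (f x - f y) ^ 2 ≤ 4 * Λ ^ 2 := by
    calc (f x - f y) ^ 2 = |f x - f y| ^ 2 := (sq_abs _).symm
      _ ≤ (2 * Λ) ^ 2 := by gcongr
      _ = 4 * Λ ^ 2 := by ring
  calc cosh (2 * (f x - f y)) - 1
      ≤ (2 * (f x - f y)) ^ 2 / 2 * exp ((2 * (f x - f y)) ^ 2 / 2) := cosh_sub_one_le _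
    _ = 2 * (f x - f y) ^ 2 * exp (2 * (f x - f y) ^ 2) := by ring_nf
    _ ≤ 2 * (T * ∫ t in (0 : ℝ)..T, f' t ^ 2) * exp (2 * (4 * Λ ^ 2)) := by
        gcongr
        exact mul_nonneg zero_le_two ((sq_nonneg _).trans hint)
    _ = 2 * T * exp (8 * Λ ^ 2) * ∫ t in (0 : ℝ)..T, f' t ^ 2 := by ring_nf

theorem exp_mul_sq_sub_le (hf : Continuous f) (hg : ∀ x, HasDerivAt g (g' x) x)
    (hg' : Continuous g') (hb : ∀ x, |f x - h| ≤ Λ) (hx : x ∈ Icc 0 T) (hy : y ∈ Icc 0 T) :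
    exp (2 * (f x + f y)) * (g x - g y) ^ 2 ≤
      T * exp (8 * Λ) * ∫ t in (0 : ℝ)..T, exp (4 * f t) * g' t ^ 2 := by
  have hT : 0 ≤ T := hx.1.trans hx.2
  have hexp (t : ℝ) : exp (2 * (f x + f y)) ≤ exp (8 * Λ) * exp (4 * f t) := by
    rw [← exp_add, exp_le_exp]
    linarith [(abs_le.1 (hb x)).2, (abs_le.1 (hb y)).2, (abs_le.1 (hb t)).1]
  calc exp (2 * (f x + f y)) * (g x - g y) ^ 2
      ≤ exp (2 * (f x + f y)) * (T * ∫ t in (0 : ℝ)..T, g' t ^ 2) := by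
        gcongr
        exact sq_sub_le_mul_integral_sq_deriv hg hg' hx hy
    _ = T * ∫ t in (0 : ℝ)..T, exp (2 * (f x + f y)) * g' t ^ 2 := by
        rw [intervalIntegral.integral_const_mul]
        ring
    _ ≤ T * ∫ t in (0 : ℝ)..T, exp (8 * Λ) * exp (4 * f t) * g' t ^ 2 := by
        gcongr
        refine intervalIntegral.integral_mono hT (Continuous.intervalIntegrable (by fun_prop) _ _)
          (Continuous.intervalIntegrable (by fun_prop) _ _) fun t => ?_
        gcongr
        exact hexp t
    _ = T * exp (8 * Λ) * ∫ t in (0 : ℝ)..T, exp (4 * f t) * g' t ^ 2 := by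
        simp only [mul_assoc, intervalIntegral.integral_const_mul]

theorem coshDistSubOne_le_integral_hypNormSq {γ γ' : ℝ → ℝ × ℝ}
    (hγ : ∀ x, HasDerivAt γ (γ' x) x) (hγ' : Continuous γ') (hb : ∀ x, |(γ x).1 - h| ≤ Λ)
    (hx : x ∈ Icc 0 T) (hy : y ∈ Icc 0 T) :
    coshDistSubOne (γ x) (γ y) ≤ 2 * T * (exp (8 * Λ ^ 2) + exp (8 * Λ)) *
      ∫ t in (0 : ℝ)..T, hypNormSq (γ t) (γ' t) := by
  have hT : 0 ≤ T := hx.1.trans hx.2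
  have hcont : Continuous γ := continuous_iff_continuousAt.2 fun x => (hγ x).continuousAt
  have hu := cosh_two_mul_sub_sub_one_le (fun x => hasDerivAt_fst (hγ x)) hγ'.fst hb hx hy
  have hv := exp_mul_sq_sub_le hcont.fst (fun x => hasDerivAt_snd (hγ x)) hγ'.snd hb hx hy
  have hI : 0 ≤ ∫ t in (0 : ℝ)..T, (γ' t).1 ^ 2 :=
    intervalIntegral.integral_nonneg hT fun t _ => sq_nonneg _
  have hJ : 0 ≤ ∫ t in (0 : ℝ)..T, exp (4 * (γ t).1) * (γ' t).2 ^ 2 :=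
    intervalIntegral.integral_nonneg hT fun t _ => by positivity
  simp only [coshDistSubOne, hypNormSq]
  rw [intervalIntegral.integral_add (Continuous.intervalIntegrable (by fun_prop) _ _)
    (Continuous.intervalIntegrable (by fun_prop) _ _)]
  have hcross₁ := mul_nonneg (mul_nonneg hT (exp_pos (8 * Λ)).le) hI
  have hcross₂ := mul_nonneg (mul_nonneg hT (exp_pos (8 * Λ ^ 2)).le) hJ
  linarith

end Oscillation

/-- The energy of the loop `t ↦ Φ (s, t)`, `0 ≤ t ≤ T`. -/
def angularEnergy (T : ℝ) (Φ : ℝ × ℝ → ℝ × ℝ) (s : ℝ) : ℝ :=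
  ∫ t in (0 : ℝ)..T, hypNormSq (Φ (s, t)) (dirDeriv (0, 1) Φ (s, t))

theorem coshDistSubOne_le_angularEnergy {Φ : ℝ × ℝ → ℝ × ℝ} (hΦ : ContDiff ℝ 1 Φ) {T Λ h : ℝ}
    (hT : 0 < T) (hper : ∀ p, Φ (p + (0, T)) = Φ p) {s : ℝ} (hb : ∀ t, |(Φ (s, t)).1 - h| ≤ Λ)
    (t t' : ℝ) :
    coshDistSubOne (Φ (s, t)) (Φ (s, t')) ≤
      2 * T * (exp (8 * Λ ^ 2) + exp (8 * Λ)) * angularEnergy T Φ s := by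
  have hloop : Function.Periodic (fun t => Φ (s, t)) T := fun t => by simpa using hper (s, t)
  obtain ⟨x, hx, hxt⟩ := hloop.exists_mem_Ico₀ hT t
  obtain ⟨y, hy, hyt⟩ := hloop.exists_mem_Ico₀ hT t'
  have hcont := continuous_dirDeriv hΦ (0, 1)
  rw [hxt, hyt]
  exact coshDistSubOne_le_integral_hypNormSq (γ := fun t => Φ (s, t))
    (γ' := fun t => dirDeriv (0, 1) Φ (s, t))
    (hasDerivAt_dirDeriv_snd (hΦ.differentiable one_ne_zero) s) (by fun_prop) hb
    (Ico_subset_Icc_self hx) (Ico_subset_Icc_self hy)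

theorem HarmonicCyl.eq_of_integrable_angularEnergy {Φ : ℝ × ℝ → ℝ × ℝ} (hΦh : HarmonicCyl Φ)
    (hΦ : ContDiff ℝ 2 Φ) {T Λ : ℝ} (hT : 0 < T) (hper : ∀ p, Φ (p + (0, T)) = Φ p)
    {h : ℝ → ℝ} (hb : ∀ s t, |(Φ (s, t)).1 - h s| ≤ Λ) (hint : Integrable (angularEnergy T Φ))
    (s t t' : ℝ) : Φ (s, t) = Φ (s, t') := by
  set Ψ := fun p => Φ (p + (0, t' - t)) with hΨ_def
  have hΨ : ContDiff ℝ 2 Ψ := by fun_prop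
  set Q := fun p => coshDistSubOne (Φ p) (Ψ p) with hQ_def
  have hQ : ContDiff ℝ 2 Q := contDiff_coshDistSubOne hΦ hΨ
  have hQper (p : ℝ × ℝ) : Q (p + (0, T)) = Q p := by
    simp only [hQ_def, hΨ_def, hper, add_right_comm p (0, T)]
  have hconvex : ConvexOn ℝ univ fun s => ∫ t in (0 : ℝ)..T, Q (s, t) :=
    convexOn_integral_of_laplacian_nonneg hQ hT.le hQper
      (laplacian_coshDistSubOne_nonneg hΦ hΨ hΦh (hΦh.comp_add_right _))
  set C := T * (2 * T * (exp (8 * Λ ^ 2) + exp (8 * Λ))) with hC_def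
  have hbound (s : ℝ) : ∫ t in (0 : ℝ)..T, Q (s, t) ≤ C * angularEnergy T Φ s := by
    calc ∫ t in (0 : ℝ)..T, Q (s, t)
        ≤ ∫ _ in (0 : ℝ)..T, 2 * T * (exp (8 * Λ ^ 2) + exp (8 * Λ)) * angularEnergy T Φ s := by
          have hcont := hQ.continuous
          refine intervalIntegral.integral_mono hT.le
            (Continuous.intervalIntegrable (by fun_prop) _ _) (by simp) fun x => ?_
          simpa [hQ_def, hΨ_def] using
            coshDistSubOne_le_angularEnergy (hΦ.of_le one_le_two) hT hper (hb s) x (x + (t' - t))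
      _ = C * angularEnergy T Φ s := by simp [hC_def]; ring
  have hfreq {l : Filter ℝ} (hl : ∀ S ∈ l, volume S = ⊤) (ε : ℝ) (hε : ε > 0) :
      ∃ᶠ s in l, ∫ t in (0 : ℝ)..T, Q (s, t) < ε :=
    (frequently_lt_of_integrable hl (hint.const_mul C) hε).mono fun s hs => (hbound s).trans_lt hs
  have hle : ∫ t in (0 : ℝ)..T, Q (s, t) ≤ 0 :=
    le_of_convexOn_of_frequently_lt hconvex (hfreq fun _ => volume_eq_top_of_mem_atBot)
      (hfreq fun _ => volume_eq_top_of_mem_atTop) s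
  have hcont := hQ.continuous
  have hQzero : Q (s, t) = 0 :=
    eq_zero_of_periodic_of_integral_nonpos (f := fun t => Q (s, t)) (by fun_prop)
      (fun t => by simpa using hQper (s, t)) hT (fun t => coshDistSubOne_nonneg _ _) hle t
  simpa [hΨ_def] using eq_of_coshDistSubOne_eq_zero hQzero

theorem tendsto_cosh_atTop : Tendsto cosh atTop atTop :=
  tendsto_atTop_mono (fun x => by rw [cosh_eq]; linarith [exp_pos (-x)])
    (tendsto_exp_atTop.atTop_div_const two_pos)

theorem tendsto_tanh_atTop : Tendsto tanh atTop (𝓝 1) := by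
  have hlim : Tendsto (fun x => 1 - exp (-x) / cosh x) atTop (𝓝 (1 - 0)) :=
    (tendsto_exp_neg_atTop_nhds_zero.div_atTop tendsto_cosh_atTop).const_sub 1
  rw [sub_zero] at hlim
  refine hlim.congr fun x => ?_
  rw [tanh_eq_sinh_div_cosh, ← cosh_sub_sinh]
  field_simp [(cosh_pos x).ne']
  ring

section AsymptoticSlope

variable {f f' : ℝ → ℝ} {Λ l : ℝ}

theorem eq_one_of_tendsto_deriv_of_abs_sub_log_cosh_le (hf : ∀ s, HasDerivAt f (f' s) s)
    (hb : ∀ s, |f s - log (cosh s)| ≤ Λ) (hl : Tendsto f' atTop (𝓝 l)) : l = 1 := by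
  have hderiv (s : ℝ) : HasDerivAt (fun s => f s - log (cosh s)) (f' s - tanh s) s := by
    rw [tanh_eq_sinh_div_cosh]
    exact (hf s).fun_sub ((hasDerivAt_cosh s).log (cosh_pos s).ne')
  exact sub_eq_zero.1 (eq_zero_of_tendsto_deriv_of_bounded hderiv hb (hl.sub tendsto_tanh_atTop))

theorem eq_neg_one_of_tendsto_deriv_of_abs_sub_log_cosh_le (hf : ∀ s, HasDerivAt f (f' s) s)
    (hb : ∀ s, |f s - log (cosh s)| ≤ Λ) (hl : Tendsto f' atBot (𝓝 l)) : l = -1 := by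
  have hderiv (s : ℝ) : HasDerivAt (fun s => f (-s)) (-f' (-s)) s := by
    exact ((hf (-s)).comp s (hasDerivAt_neg s)).congr_deriv (mul_neg_one _)
  have hb' (s : ℝ) : |f (-s) - log (cosh s)| ≤ Λ := by simpa using hb (-s)
  linarith [eq_one_of_tendsto_deriv_of_abs_sub_log_cosh_le hderiv hb'
    (hl.comp tendsto_neg_atTop_atBot).neg]

end AsymptoticSlope

/-- `γ` is a geodesic of `du² + e⁴ᵘ dv²`, parametrized proportionally to arc length, with
velocity `γ'`. -/
def IsHypGeodesic (γ γ' : ℝ → ℝ × ℝ) : Prop :=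
  ∀ s, HasDerivAt γ (γ' s) s ∧ HasDerivAt γ' (geodAccel (γ s) (γ' s)) s

/-- The momentum `e⁴ᵘ v'` of a velocity `ξ` at `X`, conserved along geodesics because
`du² + e⁴ᵘ dv²` is invariant under translations of `v`. -/
def hypMomentum (X ξ : ℝ × ℝ) : ℝ := exp (4 * X.1) * ξ.2

theorem hypNormSq_eq_momentum (X ξ : ℝ × ℝ) :
    hypNormSq X ξ = ξ.1 ^ 2 + hypMomentum X ξ ^ 2 * exp (-(4 * X.1)) := by
  rw [hypNormSq, hypMomentum, exp_neg]
  field_simp [exp_ne_zero]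

theorem one_sub_fst_sq_of_hypMomentum {X ξ : ℝ × ℝ} {a : ℝ} (hunit : hypNormSq X ξ = 1)
    (hmom : 2 * a * hypMomentum X ξ = -1) : 1 - ξ.1 ^ 2 = (1 / (2 * a * exp (2 * X.1))) ^ 2 := by
  have ha : a ≠ 0 := by
    rintro rfl
    norm_num at hmom
  have hexp : exp (4 * X.1) = exp (2 * X.1) ^ 2 := by rw [← exp_nat_mul]; push_cast; ring_nf
  rw [hypNormSq_eq_momentum, exp_neg, hexp] at hunit
  rw [sub_eq_of_eq_add' hunit.symm]
  field_simp
  linear_combination (2 * a * hypMomentum X ξ - 1) * hmom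

namespace IsHypGeodesic

variable {γ γ' : ℝ → ℝ × ℝ}

section ConservationLaws

variable (hγ : IsHypGeodesic γ γ') (s t : ℝ)
include hγ

theorem hypMomentum_eq : hypMomentum (γ s) (γ' s) = hypMomentum (γ t) (γ' t) := by
  refine eq_of_hasDerivAt_zero (f := fun s => hypMomentum (γ s) (γ' s)) (fun s => ?_) s t
  obtain ⟨hpos, hvel⟩ := hγ s
  refine (((hasDerivAt_fst hpos).const_mul 4).exp.fun_mul (hasDerivAt_snd hvel)).congr_deriv ?_
  simp only [geodAccel]
  ring

theorem hypNormSq_eq : hypNormSq (γ s) (γ' s) = hypNormSq (γ t) (γ' t) := by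
  refine eq_of_hasDerivAt_zero (f := fun s => hypNormSq (γ s) (γ' s)) (fun s => ?_) s t
  obtain ⟨hpos, hvel⟩ := hγ s
  refine (((hasDerivAt_fst hvel).fun_pow 2).fun_add
    (((hasDerivAt_fst hpos).const_mul 4).exp.fun_mul
      ((hasDerivAt_snd hvel).fun_pow 2))).congr_deriv ?_
  simp only [geodAccel]
  push_cast
  ring

theorem velocity_fst_eq :
    (γ' s).1 = 2 * hypMomentum (γ 0) (γ' 0) * ((γ s).2 - (γ t).2) + (γ' t).1 := by
  set c := hypMomentum (γ 0) (γ' 0) with hc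
  have hconst : (γ' s).1 - 2 * c * (γ s).2 = (γ' t).1 - 2 * c * (γ t).2 := by
    refine eq_of_hasDerivAt_zero (f := fun s => (γ' s).1 - 2 * c * (γ s).2) (fun s => ?_) s t
    obtain ⟨hpos, hvel⟩ := hγ s
    refine ((hasDerivAt_fst hvel).fun_sub ((hasDerivAt_snd hpos).const_mul (2 * c))).congr_deriv ?_
    rw [hc, hγ.hypMomentum_eq 0 s, hypMomentum, geodAccel]
    ring
  linarith

end ConservationLaws

theorem exp_two_mul_fst_eq (hγ : IsHypGeodesic γ γ') (hunit : ∀ s, hypNormSq (γ s) (γ' s) = 1)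
    (s : ℝ) :
    exp (2 * (γ s).1) = exp (2 * (γ 0).1) * (cosh (2 * s) + (γ' 0).1 * sinh (2 * s)) ∧
      (γ' s).1 * exp (2 * (γ s).1) =
        exp (2 * (γ 0).1) * (sinh (2 * s) + (γ' 0).1 * cosh (2 * s)) := by
  have hexp (s : ℝ) : HasDerivAt (fun s => exp (2 * (γ s).1))
      (2 * ((γ' s).1 * exp (2 * (γ s).1))) s :=
    ((hasDerivAt_fst (hγ s).1).const_mul 2).exp.congr_deriv (by ring)
  have hmul (s : ℝ) : HasDerivAt (fun s => (γ' s).1 * exp (2 * (γ s).1))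
      (2 * exp (2 * (γ s).1)) s := by
    refine ((hasDerivAt_fst (hγ s).2).fun_mul (hexp s)).congr_deriv ?_
    have hspeed := hunit s
    rw [hypNormSq] at hspeed
    rw [geodAccel]
    linear_combination 2 * exp (2 * (γ s).1) * hspeed
  obtain ⟨h₁, h₂⟩ := eq_cosh_sinh_of_hasDerivAt hexp hmul s
  exact ⟨by rw [h₁]; ring, by rw [h₂]; ring⟩

section Ends

variable {a Λ : ℝ} (hγ : IsHypGeodesic γ γ') (hb : ∀ s, |(γ s).1 - log (cosh s)| ≤ Λ)
include hγ hb

theorem velocity_of_tendsto (hbot : Tendsto (fun s => (γ s).2) atBot (𝓝 a))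
    (htop : Tendsto (fun s => (γ s).2) atTop (𝓝 (-a))) :
    2 * a * hypMomentum (γ 0) (γ' 0) = -1 ∧ ∀ s, (γ s).2 = -a * (γ' s).1 := by
  set c := hypMomentum (γ 0) (γ' 0)
  have hvel (s : ℝ) : (γ' s).1 = 2 * c * ((γ s).2 - (γ 0).2) + (γ' 0).1 := hγ.velocity_fst_eq s 0
  have hlim {l : Filter ℝ} {v : ℝ} (hv : Tendsto (fun s => (γ s).2) l (𝓝 v)) :
      Tendsto (fun s => (γ' s).1) l (𝓝 (2 * c * (v - (γ 0).2) + (γ' 0).1)) := by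
    exact (((hv.sub_const _).const_mul _).add_const _).congr fun s => (hvel s).symm
  have hslope_top := eq_one_of_tendsto_deriv_of_abs_sub_log_cosh_le
    (fun s => hasDerivAt_fst (hγ s).1) hb (hlim htop)
  have hslope_bot := eq_neg_one_of_tendsto_deriv_of_abs_sub_log_cosh_le
    (fun s => hasDerivAt_fst (hγ s).1) hb (hlim hbot)
  have hac : 2 * a * c = -1 := by linarith
  refine ⟨hac, fun s => ?_⟩
  linear_combination (γ s).2 * hac + a * hvel s + a / 2 * (hslope_top + hslope_bot)

theorem hypNormSq_eq_one (htop : Tendsto (fun s => (γ' s).1) atTop (𝓝 1)) (s : ℝ) :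
    hypNormSq (γ s) (γ' s) = 1 := by
  have hlogcosh : Tendsto (fun s => -Λ + log (cosh s)) atTop atTop :=
    tendsto_atTop_add_const_left _ _ (tendsto_log_atTop.comp tendsto_cosh_atTop)
  have hfst : Tendsto (fun s => (γ s).1) atTop atTop :=
    tendsto_atTop_mono (fun s => by linarith [(abs_le.1 (hb s)).1]) hlogcosh
  have hexp : Tendsto (fun t => exp (-(4 * (γ t).1))) atTop (𝓝 0) :=
    tendsto_exp_neg_atTop_nhds_zero.comp (hfst.const_mul_atTop four_pos)
  have hlim := (htop.pow 2).add (hexp.const_mul (hypMomentum (γ 0) (γ' 0) ^ 2))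
  rw [one_pow, mul_zero, add_zero] at hlim
  refine tendsto_nhds_unique (tendsto_const_nhds.congr fun t => ?_) hlim
  rw [hγ.hypNormSq_eq s t, hypNormSq_eq_momentum, hγ.hypMomentum_eq t 0]

theorem exists_eq_of_tendsto (ha : 0 < a) (hbot : Tendsto (fun s => (γ s).2) atBot (𝓝 a))
    (htop : Tendsto (fun s => (γ s).2) atTop (𝓝 (-a))) :
    ∃ b ∈ Ioo (-1 : ℝ) 1, ∀ s,
      exp (2 * (γ s).1) = (cosh (2 * s) - b * sinh (2 * s)) / (2 * a * √(1 - b ^ 2)) ∧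
      (γ s).2 = a * (b * cosh (2 * s) - sinh (2 * s)) / (cosh (2 * s) - b * sinh (2 * s)) := by
  obtain ⟨hmom, hvel⟩ := hγ.velocity_of_tendsto hb hbot htop
  have hvel_top : Tendsto (fun s => (γ' s).1) atTop (𝓝 1) := by
    refine ((htop.const_mul (-a⁻¹)).congr fun s => ?_).trans_eq (by field_simp)
    rw [hvel s]
    field_simp
  have hunit := hγ.hypNormSq_eq_one hb hvel_top
  have hsol := hγ.exp_two_mul_fst_eq hunit
  set p := exp (2 * (γ 0).1)
  set q := (γ' 0).1
  have hp : 0 < p := exp_pos _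
  have hspeed : 1 - (-q) ^ 2 = (1 / (2 * a * p)) ^ 2 := by
    rw [neg_sq]
    exact one_sub_fst_sq_of_hypMomentum (hunit 0) hmom
  have hsqrt : √(1 - (-q) ^ 2) = 1 / (2 * a * p) := by
    rw [hspeed, sqrt_sq (by positivity)]
  refine ⟨-q, ?_, fun s => ?_⟩
  · rw [mem_Ioo, ← abs_lt, ← sq_lt_one_iff_abs_lt_one]
    have : 0 < (1 / (2 * a * p)) ^ 2 := by positivity
    linarith
  obtain ⟨hexp, hexp'⟩ := hsol s
  have hden : 0 < cosh (2 * s) + q * sinh (2 * s) :=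
    pos_of_mul_pos_right (hexp ▸ exp_pos _) hp.le
  have hslope : (γ' s).1 * (cosh (2 * s) + q * sinh (2 * s)) =
      sinh (2 * s) + q * cosh (2 * s) := by
    refine mul_left_cancel₀ hp.ne' ?_
    rw [← hexp', hexp]
    ring
  rw [hsqrt, neg_mul, sub_neg_eq_add, hvel s]
  constructor
  · rw [hexp]
    field_simp
  · rw [eq_div_iff hden.ne']
    linear_combination -a * hslope

end Ends

end IsHypGeodesic

/-- The colatitude `θ` as a function of the Mercator coordinate `s`: the solution of
`dθ/ds = sin θ` with `θ = π / 2` at `s = 0`. -/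
def colatitude (s : ℝ) : ℝ := 2 * arctan (exp s)

theorem colatitude_mem_Ioo (s : ℝ) : colatitude s ∈ Ioo 0 π := by
  have hpos := arctan_pos.2 (exp_pos s)
  have hlt := arctan_lt_pi_div_two (exp s)
  rw [colatitude]
  constructor <;> linarith

theorem sin_colatitude_pos (s : ℝ) : 0 < sin (colatitude s) :=
  sin_pos_of_mem_Ioo (colatitude_mem_Ioo s)

theorem cos_colatitude (s : ℝ) : cos (colatitude s) = -sinh s / cosh s := by
  rw [colatitude, cos_two_mul, cos_sq_arctan, sinh_eq, cosh_eq, exp_neg]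
  field_simp
  ring

theorem sin_colatitude (s : ℝ) : sin (colatitude s) = 1 / cosh s := by
  have := cosh_pos s
  refine (pow_left_inj₀ (sin_colatitude_pos s).le (by positivity) two_ne_zero).1 ?_
  rw [sin_sq, cos_colatitude]
  field_simp
  linarith [cosh_sq s]

theorem hasDerivAt_colatitude (s : ℝ) : HasDerivAt colatitude (sin (colatitude s)) s := by
  refine ((hasDerivAt_exp s).arctan.const_mul 2).congr_deriv ?_
  rw [sin_colatitude, cosh_eq, exp_neg]
  field_simp
  ring

theorem contDiff_colatitude {n : WithTop ℕ∞} : ContDiff ℝ n colatitude :=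
  contDiff_const.mul (contDiff_arctan.comp contDiff_exp)

theorem strictMono_colatitude : StrictMono colatitude :=
  (arctan_strictMono.comp exp_strictMono).const_mul two_pos

theorem range_colatitude : range colatitude = Ioo 0 π := by
  refine Subset.antisymm (range_subset_iff.2 colatitude_mem_Ioo) fun θ hθ => ?_
  have htan : 0 < tan (θ / 2) :=
    tan_pos_of_pos_of_lt_pi_div_two (half_pos hθ.1) (div_lt_div_of_pos_right hθ.2 two_pos)
  refine ⟨log (tan (θ / 2)), ?_⟩
  rw [colatitude, exp_log htan, arctan_tan (by linarith [hθ.1, pi_pos]) (by linarith [hθ.2])]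
  ring

theorem tendsto_colatitude_atBot : Tendsto colatitude atBot (𝓝[>] 0) := by
  refine tendsto_nhdsWithin_iff.2 ⟨?_, Eventually.of_forall fun s => (colatitude_mem_Ioo s).1⟩
  have hlim := ((continuous_arctan.tendsto 0).comp tendsto_exp_atBot).const_mul 2
  rwa [arctan_zero, mul_zero] at hlim

theorem tendsto_colatitude_atTop : Tendsto colatitude atTop (𝓝[<] π) := by
  refine tendsto_nhdsWithin_iff.2 ⟨?_, Eventually.of_forall fun s => (colatitude_mem_Ioo s).2⟩
  have hlim := (tendsto_nhds_of_tendsto_nhdsWithin tendsto_arctan_atTop).comp tendsto_exp_atTop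
  refine (hlim.const_mul 2).trans_eq ?_
  rw [mul_div_cancel₀ π two_ne_zero]

theorem integrable_sin_colatitude_mul {E : ℝ → ℝ} (hE : IntegrableOn E (Ioo 0 π)) :
    Integrable fun s => sin (colatitude s) * E (colatitude s) := by
  rw [← range_colatitude, ← image_univ] at hE
  exact integrableOn_univ.1 <| (integrableOn_image_iff_integrableOn_deriv_smul_of_monotoneOn
    MeasurableSet.univ (fun s _ => (hasDerivAt_colatitude s).hasDerivWithinAt)
    (strictMono_colatitude.monotone.monotoneOn _) E).1 hE

theorem one_add_cos_sq_colatitude (b s : ℝ) :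
    1 + cos (colatitude s) ^ 2 + 2 * b * cos (colatitude s) =
      (cosh (2 * s) - b * sinh (2 * s)) / cosh s ^ 2 := by
  rw [cos_colatitude, cosh_two_mul, sinh_two_mul]
  field_simp
  ring

theorem cosh_sub_mul_sinh_pos {b : ℝ} (hb : b ∈ Ioo (-1 : ℝ) 1) (x : ℝ) :
    0 < cosh x - b * sinh x := by
  obtain ⟨hlt, hgt⟩ := hb
  rw [cosh_eq, sinh_eq]
  linarith [mul_pos (sub_pos.2 hgt) (exp_pos x), mul_pos (neg_lt_iff_pos_add.1 hlt) (exp_pos (-x))]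

theorem eq_uab_colatitude {a b s x : ℝ} (ha : 0 < a) (hb : b ∈ Ioo (-1 : ℝ) 1)
    (hx : exp (2 * x) = (cosh (2 * s) - b * sinh (2 * s)) / (2 * a * √(1 - b ^ 2))) :
    x = uab a b (colatitude s) := by
  have hden := cosh_sub_mul_sinh_pos hb (2 * s)
  have := cosh_pos s
  have hsqrt : 0 < √(1 - b ^ 2) :=
    sqrt_pos.2 (sub_pos.2 ((sq_lt_one_iff_abs_lt_one b).2 (abs_lt.2 hb)))
  have hlog := congrArg log hx
  rw [log_exp, log_div hden.ne' (by positivity)] at hlog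
  rw [uab, one_add_cos_sq_colatitude, sin_colatitude, one_div, log_inv,
    log_div (by positivity) (by positivity), log_div hden.ne' (by positivity), log_pow]
  push_cast
  linarith

theorem vab_colatitude (a b s : ℝ) :
    vab a b (colatitude s) =
      a * (b * cosh (2 * s) - sinh (2 * s)) / (cosh (2 * s) - b * sinh (2 * s)) := by
  have := cosh_pos s
  have hnum : a * (b + b * cos (colatitude s) ^ 2 + 2 * cos (colatitude s)) =
      a * (b * cosh (2 * s) - sinh (2 * s)) / cosh s ^ 2 := by
    rw [cos_colatitude, cosh_two_mul, sinh_two_mul]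
    field_simp
    ring
  rw [vab, one_add_cos_sq_colatitude, hnum, div_div_div_cancel_right₀ (by positivity)]

/-- The function on the flat cylinder that is `f` in the Mercator coordinates `(s, φ)`. -/
def toCyl (f : ℝ → ℝ → ℝ) (p : ℝ × ℝ) : ℝ := f (colatitude p.1) p.2

/-- The contribution of the `φ`-derivatives to the energy density of `(u, v)` with respect to
`dθ dφ`; the factor `(sin θ)⁻² · sin θ` combines the inverse metric and the area form. -/
def azimuthalDensity (u v : ℝ → ℝ → ℝ) (p : ℝ × ℝ) : ℝ :=
  hypNormSq (u p.1 p.2, v p.1 p.2) (pdφ u p.1 p.2, pdφ v p.1 p.2) / sin p.1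

section PullBack

variable {f u v : ℝ → ℝ → ℝ}
  (hf : ContDiffOn ℝ 2 (fun p : ℝ × ℝ => f p.1 p.2) (Ioo 0 π ×ˢ univ))
  (hu : ContDiffOn ℝ 2 (fun p : ℝ × ℝ => u p.1 p.2) (Ioo 0 π ×ˢ univ))
  (hv : ContDiffOn ℝ 2 (fun p : ℝ × ℝ => v p.1 p.2) (Ioo 0 π ×ˢ univ))

section Scalar

include hf

theorem contDiff_toCyl : ContDiff ℝ 2 (toCyl f) :=
  hf.comp_contDiff ((contDiff_colatitude.comp contDiff_fst).prodMk contDiff_snd)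
    fun p => ⟨colatitude_mem_Ioo p.1, mem_univ p.2⟩

theorem differentiable_toCyl : Differentiable ℝ (toCyl f) :=
  (contDiff_toCyl hf).differentiable two_ne_zero

theorem contDiffOn_meridian (φ : ℝ) : ContDiffOn ℝ 2 (fun θ => f θ φ) (Ioo 0 π) :=
  hf.comp (contDiff_prodMk_left φ).contDiffOn fun _ hθ => ⟨hθ, mem_univ φ⟩

theorem hasDerivAt_pdθ {θ : ℝ} (hθ : θ ∈ Ioo 0 π) (φ : ℝ) :
    HasDerivAt (fun θ => f θ φ) (pdθ f θ φ) θ :=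
  (((contDiffOn_meridian hf φ).differentiableOn two_ne_zero).differentiableAt
    (isOpen_Ioo.mem_nhds hθ)).hasDerivAt

theorem hasDerivAt_pdθ_pdθ {θ : ℝ} (hθ : θ ∈ Ioo 0 π) (φ : ℝ) :
    HasDerivAt (fun θ => pdθ f θ φ) (pdθ (pdθ f) θ φ) θ :=
  ((((contDiffOn_meridian hf φ).deriv_of_isOpen isOpen_Ioo (m := 1) (by norm_num)).differentiableOn
    one_ne_zero).differentiableAt (isOpen_Ioo.mem_nhds hθ)).hasDerivAt

theorem continuousOn_pdφ : ContinuousOn (fun p : ℝ × ℝ => pdφ f p.1 p.2) (Ioo 0 π ×ˢ univ) := by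
  have hopen : IsOpen (Ioo (0 : ℝ) π ×ˢ (univ : Set ℝ)) := isOpen_Ioo.prod isOpen_univ
  refine ((hf.continuousOn_fderiv_of_isOpen hopen one_le_two).clm_apply
    (continuousOn_const (c := ((0 : ℝ), (1 : ℝ))))).congr fun p hp => ?_
  have hdiff := (hf.differentiableOn two_ne_zero).differentiableAt (hopen.mem_nhds hp)
  exact (hdiff.hasFDerivAt.comp_hasDerivAt p.2
    ((hasDerivAt_const p.2 p.1).prodMk (hasDerivAt_id p.2))).deriv

theorem dirDeriv_fst_toCyl (s φ : ℝ) :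
    dirDeriv (1, 0) (toCyl f) (s, φ) = sin (colatitude s) * pdθ f (colatitude s) φ := by
  rw [mul_comm]
  exact (hasDerivAt_dirDeriv_fst (differentiable_toCyl hf) s φ).unique
    ((hasDerivAt_pdθ hf (colatitude_mem_Ioo s) φ).comp s (hasDerivAt_colatitude s))

theorem dirDeriv_snd_toCyl (s φ : ℝ) :
    dirDeriv (0, 1) (toCyl f) (s, φ) = pdφ f (colatitude s) φ :=
  (hasDerivAt_dirDeriv_snd (differentiable_toCyl hf) s φ).deriv.symm

theorem laplacian_toCyl (s φ : ℝ) :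
    dirDeriv (1, 0) (dirDeriv (1, 0) (toCyl f)) (s, φ)
        + dirDeriv (0, 1) (dirDeriv (0, 1) (toCyl f)) (s, φ) =
      sin (colatitude s) ^ 2 * lapS2 f (colatitude s) φ := by
  have hdiff (e : ℝ × ℝ) : Differentiable ℝ (dirDeriv e (toCyl f)) :=
    (contDiff_dirDeriv (contDiff_toCyl hf) e).differentiable one_ne_zero
  have hfst : dirDeriv (1, 0) (dirDeriv (1, 0) (toCyl f)) (s, φ) =
      cos (colatitude s) * sin (colatitude s) * pdθ f (colatitude s) φ
        + sin (colatitude s) * (pdθ (pdθ f) (colatitude s) φ * sin (colatitude s)) := by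
    have hderiv := hasDerivAt_dirDeriv_fst (hdiff (1, 0)) s φ
    simp only [dirDeriv_fst_toCyl hf] at hderiv
    exact hderiv.unique ((hasDerivAt_colatitude s).sin.fun_mul
      ((hasDerivAt_pdθ_pdθ hf (colatitude_mem_Ioo s) φ).comp s (hasDerivAt_colatitude s)))
  have hsnd : dirDeriv (0, 1) (dirDeriv (0, 1) (toCyl f)) (s, φ) =
      pdφ (pdφ f) (colatitude s) φ := by
    have hderiv := hasDerivAt_dirDeriv_snd (hdiff (0, 1)) s φ
    simp only [dirDeriv_snd_toCyl hf] at hderiv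
    exact hderiv.deriv.symm
  have := sin_colatitude_pos s
  rw [hfst, hsnd, lapS2]
  field_simp
  ring

end Scalar

section Map

include hu hv

theorem harmonicCyl_toCyl
    (hharm : ∀ θ ∈ Ioo (0 : ℝ) π, ∀ φ : ℝ,
      lapS2 u θ φ = 2 * exp (4 * u θ φ) * gradNormSqS2 v θ φ ∧
      lapS2 v θ φ = -4 * gradDotS2 u v θ φ) :
    HarmonicCyl fun p => (toCyl u p, toCyl v p) := by
  rintro ⟨s, φ⟩
  obtain ⟨hlapu, hlapv⟩ := hharm (colatitude s) (colatitude_mem_Ioo s) φ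
  have hfirst := dirDeriv_prodMk (differentiable_toCyl hu) (differentiable_toCyl hv)
  have hsecond (e : ℝ × ℝ) := dirDeriv_prodMk
    ((contDiff_dirDeriv (contDiff_toCyl hu) e).differentiable one_ne_zero)
    ((contDiff_dirDeriv (contDiff_toCyl hv) e).differentiable one_ne_zero) e
  have := sin_colatitude_pos s
  rw [hfirst, hfirst, hsecond, hsecond]
  simp only [geodAccel, Prod.mk_add_mk, Prod.mk.injEq, laplacian_toCyl hu, laplacian_toCyl hv,
    dirDeriv_fst_toCyl hu, dirDeriv_fst_toCyl hv, dirDeriv_snd_toCyl hu, dirDeriv_snd_toCyl hv]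
  rw [hlapu, hlapv]
  simp only [gradNormSqS2, gradDotS2, toCyl]
  constructor
  · field_simp
  · field_simp
    ring

theorem angularEnergy_toCyl (s : ℝ) :
    angularEnergy (2 * π) (fun p => (toCyl u p, toCyl v p)) s =
      sin (colatitude s) * ∫ φ in Ioo 0 (2 * π), azimuthalDensity u v (colatitude s, φ) := by
  rw [← integral_Ioc_eq_integral_Ioo, ← intervalIntegral.integral_of_le two_pi_pos.le,
    ← intervalIntegral.integral_const_mul, angularEnergy,
    dirDeriv_prodMk (differentiable_toCyl hu) (differentiable_toCyl hv)]
  refine intervalIntegral.integral_congr fun φ _ => ?_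
  simp only [azimuthalDensity, mul_div_cancel₀ _ (sin_colatitude_pos s).ne',
    dirDeriv_snd_toCyl hu, dirDeriv_snd_toCyl hv]
  rfl

theorem integrable_angularEnergy_toCyl
    (hint : IntegrableOn (azimuthalDensity u v) (Ioo 0 π ×ˢ Ioo 0 (2 * π))) :
    Integrable (angularEnergy (2 * π) fun p => (toCyl u p, toCyl v p)) := by
  rw [IntegrableOn, Measure.volume_eq_prod, ← Measure.prod_restrict] at hint
  rw [funext (angularEnergy_toCyl hu hv)]
  exact integrable_sin_colatitude_mul hint.integral_prod_left

theorem integrableOn_azimuthalDensity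
    (hint : IntegrableOn (fun p : ℝ × ℝ =>
        (gradNormSqS2 (fun θ φ => u θ φ + log (sin θ)) p.1 p.2
          + exp (4 * u p.1 p.2) * gradNormSqS2 v p.1 p.2) * sin p.1)
      (Ioo 0 π ×ˢ Ioo 0 (2 * π))) :
    IntegrableOn (azimuthalDensity u v) (Ioo 0 π ×ˢ Ioo 0 (2 * π)) := by
  have hmeas : MeasurableSet (Ioo (0 : ℝ) π ×ˢ Ioo (0 : ℝ) (2 * π)) :=
    measurableSet_Ioo.prod measurableSet_Ioo
  refine hint.mono' ?_ ((ae_restrict_mem hmeas).mono fun p hp => ?_)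
  · refine ContinuousOn.aestronglyMeasurable ?_ hmeas
    refine ContinuousOn.mono ?_ (prod_mono_right (subset_univ _))
    have hcont := hu.continuousOn
    have hcontu := continuousOn_pdφ hu
    have hcontv := continuousOn_pdφ hv
    refine ContinuousOn.div ?_ (by fun_prop) fun p hp => (sin_pos_of_mem_Ioo hp.1).ne'
    simp only [hypNormSq]
    fun_prop
  · have hsin := sin_pos_of_mem_Ioo hp.1
    have hpdφ : pdφ (fun θ φ => u θ φ + log (sin θ)) p.1 p.2 = pdφ u p.1 p.2 := by
      simp only [pdφ, deriv_add_const]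
    have hpdθ : 0 ≤ (pdθ (fun θ φ => u θ φ + log (sin θ)) p.1 p.2 * sin p.1) ^ 2
        + exp (4 * u p.1 p.2) * (pdθ v p.1 p.2 * sin p.1) ^ 2 := by positivity
    rw [norm_eq_abs, azimuthalDensity, abs_of_nonneg (by unfold hypNormSq; positivity)]
    simp only [gradNormSqS2, gradDotS2, hpdφ, hypNormSq]
    rw [div_le_iff₀ hsin]
    field_simp
    linarith

end Map

end PullBack

theorem isHypGeodesic_of_harmonicCyl {Φ : ℝ × ℝ → ℝ × ℝ} (hΦ : ContDiff ℝ 2 Φ)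
    (hharm : HarmonicCyl Φ) (hconst : ∀ s t t', Φ (s, t) = Φ (s, t')) (t : ℝ) :
    IsHypGeodesic (fun s => Φ (s, t)) fun s => dirDeriv (1, 0) Φ (s, t) := by
  intro s
  have hzero : dirDeriv (0, 1) Φ = fun _ => 0 := funext fun (x, y) => dirDeriv_eq_of_hasDerivAt <|
    (hasDerivAt_const 0 (Φ (x, y))).congr_of_eventuallyEq <| Eventually.of_forall fun r => by
      simpa using hconst x (y + r) y
  have hzero' : dirDeriv (0, 1) (fun _ : ℝ × ℝ => (0 : ℝ × ℝ)) (s, t) = 0 :=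
    dirDeriv_eq_of_hasDerivAt (hasDerivAt_const 0 0)
  have htension := hharm (s, t)
  rw [hzero, hzero', show geodAccel (Φ (s, t)) 0 = 0 by simp [geodAccel], add_zero,
    add_zero] at htension
  exact ⟨hasDerivAt_dirDeriv_fst (hΦ.differentiable two_ne_zero) s t, htension ▸
    hasDerivAt_dirDeriv_fst ((contDiff_dirDeriv hΦ (1, 0)).differentiable one_ne_zero) s t⟩

theorem statement_1_general {Λ a : ℝ} (ha : 0 < a) {ub vb : ℝ → ℝ → ℝ}
    (hreg1 : ContDiffOn ℝ 2 (fun p : ℝ × ℝ => ub p.1 p.2) (Ioo 0 π ×ˢ univ))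
    (hreg2 : ContDiffOn ℝ 2 (fun p : ℝ × ℝ => vb p.1 p.2) (Ioo 0 π ×ˢ univ))
    (hper1 : ∀ θ φ : ℝ, ub θ (φ + 2 * π) = ub θ φ)
    (hper2 : ∀ θ φ : ℝ, vb θ (φ + 2 * π) = vb θ φ)
    (hbd : ∀ θ ∈ Ioo (0 : ℝ) π, ∀ φ : ℝ, |ub θ φ + log (sin θ)| ≤ Λ)
    (heq : ∀ θ ∈ Ioo (0 : ℝ) π, ∀ φ : ℝ,
      lapS2 ub θ φ = 2 * exp (4 * ub θ φ) * gradNormSqS2 vb θ φ ∧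
      lapS2 vb θ φ = -4 * gradDotS2 ub vb θ φ)
    (hen : IntegrableOn (azimuthalDensity ub vb) (Ioo 0 π ×ˢ Ioo 0 (2 * π)))
    {φ₀ : ℝ} (htrN : Tendsto (fun θ => vb θ φ₀) (𝓝[>] 0) (𝓝 a))
    (htrS : Tendsto (fun θ => vb θ φ₀) (𝓝[<] π) (𝓝 (-a))) :
    ∃ b ∈ Ioo (-1 : ℝ) 1, ∀ θ ∈ Ioo (0 : ℝ) π, ∀ φ : ℝ,
      ub θ φ = uab a b θ ∧ vb θ φ = vab a b θ := by
  set Φ : ℝ × ℝ → ℝ × ℝ := fun p => (toCyl ub p, toCyl vb p) with hΦ_def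
  have hΦ : ContDiff ℝ 2 Φ := (contDiff_toCyl hreg1).prodMk (contDiff_toCyl hreg2)
  have hharm : HarmonicCyl Φ := harmonicCyl_toCyl hreg1 hreg2 heq
  have hper (p : ℝ × ℝ) : Φ (p + (0, 2 * π)) = Φ p := by simp [hΦ_def, toCyl, hper1, hper2]
  have hbΦ (s φ : ℝ) : |(Φ (s, φ)).1 - log (cosh s)| ≤ Λ := by
    have := hbd (colatitude s) (colatitude_mem_Ioo s) φ
    rwa [sin_colatitude, one_div, log_inv, ← sub_eq_add_neg] at this
  have haxi : ∀ s φ φ', Φ (s, φ) = Φ (s, φ') := hharm.eq_of_integrable_angularEnergy hΦ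
    two_pi_pos hper hbΦ (integrable_angularEnergy_toCyl hreg1 hreg2 hen)
  obtain ⟨b, hb, hsol⟩ := (isHypGeodesic_of_harmonicCyl hΦ hharm haxi φ₀).exists_eq_of_tendsto
    (hbΦ · φ₀) ha (htrN.comp tendsto_colatitude_atBot) (htrS.comp tendsto_colatitude_atTop)
  refine ⟨b, hb, fun θ hθ φ => ?_⟩
  obtain ⟨s, rfl⟩ := range_colatitude ▸ hθ
  obtain ⟨hu, hv⟩ := hsol s
  rw [haxi s φ₀ φ] at hu hv
  exact ⟨eq_uab_colatitude ha hb hu, hv.trans (vab_colatitude a b s).symm⟩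

/-- Theorem `thm:classification-non-degeneracy`, first part:
classification of singular harmonic maps from `S²∖{N,S}` to `ℍ²` with
extreme-Kerr-type singularities: they all equal `(u_{a,b}, v_{a,b})` for some
`b ∈ (−1,1)`; in particular they are axisymmetric. -/
theorem statement_1
    (Λ a : ℝ) (hΛ : 1 ≤ Λ) (ha : 0 < a)
    (ub vb : ℝ → ℝ → ℝ)
    (hreg1 : ContDiffOn ℝ 2 (fun p : ℝ × ℝ => ub p.1 p.2) (Ioo 0 π ×ˢ (univ : Set ℝ)))
    (hreg2 : ContDiffOn ℝ 2 (fun p : ℝ × ℝ => vb p.1 p.2) (Ioo 0 π ×ˢ (univ : Set ℝ)))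
    (hper1 : ∀ θ φ : ℝ, ub θ (φ + 2 * π) = ub θ φ)
    (hper2 : ∀ θ φ : ℝ, vb θ (φ + 2 * π) = vb θ φ)
    (hext : ∃ G : ℝ → ℝ → ℝ,
      ContinuousOn (fun p : ℝ × ℝ => G p.1 p.2) (Icc 0 π ×ˢ (univ : Set ℝ)) ∧
      (∀ θ ∈ Ioo (0 : ℝ) π, ∀ φ : ℝ, G θ φ = ub θ φ + Real.log (Real.sin θ)) ∧
      (∀ θ ∈ Icc (0 : ℝ) π, ∀ φ : ℝ, |G θ φ| ≤ Λ))
    (heq : ∀ θ ∈ Ioo (0 : ℝ) π, ∀ φ : ℝ,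
      lapS2 ub θ φ = 2 * Real.exp (4 * ub θ φ) * gradNormSqS2 vb θ φ ∧
      lapS2 vb θ φ = -4 * gradDotS2 ub vb θ φ)
    (hen : IntegrableOn (fun p : ℝ × ℝ =>
        (gradNormSqS2 (fun θ φ => ub θ φ + Real.log (Real.sin θ)) p.1 p.2
          + Real.exp (4 * ub p.1 p.2) * gradNormSqS2 vb p.1 p.2) * Real.sin p.1)
        (Ioo 0 π ×ˢ Ioo 0 (2 * π)) volume)
    (htrN : ∀ φ : ℝ, Tendsto (fun θ => vb θ φ) (nhdsWithin 0 (Ioi 0)) (nhds a))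
    (htrS : ∀ φ : ℝ, Tendsto (fun θ => vb θ φ) (nhdsWithin π (Iio π)) (nhds (-a))) :
    ∃ b ∈ Ioo (-1 : ℝ) 1, ∀ θ ∈ Ioo (0 : ℝ) π, ∀ φ : ℝ,
      ub θ φ = uab a b θ ∧ vb θ φ = vab a b θ := by
  obtain ⟨G, -, hG, hGΛ⟩ := hext
  exact statement_1_general ha hreg1 hreg2 hper1 hper2
    (fun θ hθ φ => hG θ hθ φ ▸ hGΛ θ (Ioo_subset_Icc_self hθ) φ) heq
    (integrableOn_azimuthalDensity hreg1 hreg2 hen) (htrN 0) (htrS 0)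
end
end

section
/- Fix a > 0 and b ∈ (−1,1). Suppose φ₁ ∈ C²(S²) and φ₂ ∈ C²(S²) with φ₂(N) = φ₂(S) = 0 and ∫_{S²} e^{4u_{a,b}} ( |∇_{g₀}φ₂|² + φ₂² ) dvol_{g₀} < ∞, and suppose that on S²∖{N,S} the linearized harmonic map equations hold: Δ_{g₀}φ₁ − 8 e^{4u_{a,b}} |∇_{g₀}v_{a,b}|² φ₁ − 4 e^{4u_{a,b}} ∇_{g₀}v_{a,b}·∇_{g₀}φ₂ = 0 and Δ_{g₀}φ₂ + 4 ∇_{g₀}u_{a,b}·∇_{g₀}φ₂ + 4 ∇_{g₀}v_{a,b}·∇_{g₀}φ₁ = 0. Then there exists λ ∈ ℝ such that for all (θ,φ): φ₁ = λ·( b/(2(1−b²)) + cosθ/(1 + cos²θ + 2b·cosθ) ) and φ₂ = λ·a·sin⁴θ/(1 + cos²θ + 2b·cosθ)². In other words, the space of such Jacobi fields is one-dimensional, generated by (∂_b u_{a,b}, ∂_b v_{a,b}). -/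
/-! The harmonic map system is conformally invariant, and the Mercator coordinate `s` makes the
sphere minus its poles conformal to the flat cylinder. Writing `b = tanh 2c` and placing the equator
at `s = c`, the background map becomes `u = ½ log (cosh 2s / 2a)`, `v = a tanh 2s`, which up to an
isometry is a unit-speed geodesic of the hyperbolic plane, with `b` only translating `s`. Split a
Jacobi field along it into its tangential and normal parts. The tangential part is harmonic and
bounded, hence constant by Liouville's theorem. The normal part satisfies `Δν = 4ν` and, because
`ψ₂` vanishes at the poles, is `o(e^{2|s|})`; the maximum principle then forces `ν = 0`. What is
left are the constant multiples of the tangent field, which come from varying `b`. -/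

open Real MeasureTheory Set Filter

noncomputable section

open Function (uncurry)
open scoped Topology

theorem abs_le_cosh (x : ℝ) : |x| ≤ cosh x :=
  calc |x| ≤ sinh |x| := self_le_sinh_iff.2 (abs_nonneg x)
    _ ≤ cosh |x| := (sinh_lt_cosh |x|).le
    _ = cosh x := cosh_abs x

theorem hasDerivAt_tanh (x : ℝ) : HasDerivAt tanh (cosh x ^ 2)⁻¹ x := by
  have h := (hasDerivAt_sinh x).div (hasDerivAt_cosh x) (cosh_pos x).ne'
  rw [← sq, ← sq, cosh_sq_sub_sinh_sq, one_div] at h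
  exact h.congr_of_eventuallyEq (.of_forall tanh_eq_sinh_div_cosh)

theorem contDiff_tanh {n : WithTop ℕ∞} : ContDiff ℝ n tanh :=
  funext tanh_eq_sinh_div_cosh ▸ contDiff_sinh.div contDiff_cosh fun x => (cosh_pos x).ne'

theorem hasDerivAt_inv_cosh_sq (x : ℝ) :
    HasDerivAt (fun x => (cosh x ^ 2)⁻¹) (-2 * tanh x * (cosh x ^ 2)⁻¹) x := by
  have h := (hasDerivAt_cosh x).fun_pow 2 |>.fun_inv (pow_pos (cosh_pos x) 2).ne'
  refine h.congr_deriv ?_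
  rw [tanh_eq_sinh_div_cosh]
  field_simp
  ring

theorem abs_sinh_le_cosh (x : ℝ) : |sinh x| ≤ cosh x := by
  rw [abs_sinh, ← cosh_abs]
  exact (sinh_lt_cosh _).le

theorem hasDerivAt_comp_const_mul {f : ℝ → ℝ} {f' k x : ℝ} (hf : HasDerivAt f f' (k * x)) :
    HasDerivAt (fun t => f (k * t)) (k * f') x :=
  (hf.comp x (hasDerivAt_const_mul k)).congr_deriv (mul_comm _ _)

theorem deriv_deriv_cosh_const_mul (k x : ℝ) :
    deriv (deriv fun t => cosh (k * t)) x = k ^ 2 * cosh (k * x) := by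
  have hcosh : deriv (fun t => cosh (k * t)) = fun t => k * sinh (k * t) :=
    funext fun t => (hasDerivAt_comp_const_mul (hasDerivAt_cosh (k * t))).deriv
  rw [hcosh, ((hasDerivAt_comp_const_mul (hasDerivAt_sinh (k * x))).const_mul k).deriv]
  ring

theorem deriv_deriv_nonpos_of_isLocalMax {f : ℝ → ℝ} {x : ℝ} (hf : ContinuousAt f x)
    (hmax : IsLocalMax f x) : deriv (deriv f) x ≤ 0 := by
  by_contra! hpos
  have hmin : IsLocalMin f x := isLocalMin_of_deriv_deriv_pos hpos hmax.deriv_eq_zero hf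
  have hconst : f =ᶠ[𝓝 x] fun _ => f x := by
    filter_upwards [hmin, hmax] with y hle hge using le_antisymm hge hle
  have hzero : deriv (deriv f) x = 0 := by simpa using hconst.deriv.deriv_eq
  exact hpos.ne' hzero

theorem tendstoUniformly_zero_of_norm_deriv_le {ι : Type*} {f : ℝ → ι → ℝ} {s : Set ℝ} {c C : ℝ}
    [(𝓝[s] c).NeBot] (hs : Convex ℝ s)
    (hf : ∀ i, ∀ x ∈ s, DifferentiableAt ℝ (fun y => f y i) x)
    (hbound : ∀ i, ∀ x ∈ s, ‖deriv (fun y => f y i) x‖ ≤ C)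
    (hlim : ∀ i, Tendsto (fun x => f x i) (𝓝[s] c) (𝓝 0)) :
    TendstoUniformly f 0 (𝓝[s] c) := by
  have hid : Tendsto id (𝓝[s] c) (𝓝 c) := nhdsWithin_le_nhds
  have hlip : ∀ x ∈ s, ∀ i, |f x i| ≤ C * |x - c| := fun x hx i => by
    have hleft := (tendsto_const_nhds (x := f x i)).sub (hlim i) |>.norm
    have hright := ((tendsto_const_nhds (x := x)).sub hid).norm.const_mul C
    simpa using le_of_tendsto_of_tendsto hleft hright <| by
      filter_upwards [self_mem_nhdsWithin] with y hy
        using hs.norm_image_sub_le_of_norm_deriv_le (hf i) (hbound i) hy hx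
  have hmodulus : Tendsto (fun x => C * |x - c|) (𝓝[s] c) (𝓝 0) := by
    simpa using ((hid.sub_const c).abs).const_mul C
  rw [Metric.tendstoUniformly_iff]
  intro ε hε
  filter_upwards [hmodulus.eventually_lt_const hε, self_mem_nhdsWithin] with x hx hxs i
  simpa using (hlip x hxs i).trans_lt hx

/-- The flat Laplacian `∂ₛ² + ∂_φ²` of the `(s, φ)`-plane. The operators `pdθ` and `pdφ` are the
partial derivatives in the first and second argument, whatever the argument is called. -/
def flatLap (W : ℝ → ℝ → ℝ) (s φ : ℝ) : ℝ := pdθ (pdθ W) s φ + pdφ (pdφ W) s φ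

section flatLap

variable {V W : ℝ → ℝ → ℝ}

theorem contDiff_slice_left (hW : ContDiff ℝ 2 (uncurry W)) (φ : ℝ) :
    ContDiff ℝ 2 fun s => W s φ :=
  hW.comp (contDiff_id.prodMk contDiff_const)

theorem contDiff_slice_right (hW : ContDiff ℝ 2 (uncurry W)) (s : ℝ) : ContDiff ℝ 2 (W s) :=
  hW.comp (contDiff_const.prodMk contDiff_id)

theorem contDiff_fun_fst_mul {α : ℝ → ℝ} (hα : ContDiff ℝ 2 α) (hW : ContDiff ℝ 2 (uncurry W)) :
    ContDiff ℝ 2 (uncurry fun s φ => α s * W s φ) :=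
  (hα.comp contDiff_fst).mul hW

theorem deriv_deriv_add {f g : ℝ → ℝ} (hf : ContDiff ℝ 2 f) (hg : ContDiff ℝ 2 g) (x : ℝ) :
    deriv (deriv fun t => f t + g t) x = deriv (deriv f) x + deriv (deriv g) x := by
  have h : deriv (fun t => f t + g t) = fun t => deriv f t + deriv g t := funext fun t =>
    deriv_fun_add (hf.differentiable (by norm_num) t) (hg.differentiable (by norm_num) t)
  rw [h, deriv_fun_add (hf.differentiable_deriv_two x) (hg.differentiable_deriv_two x)]

theorem flatLap_add (hV : ContDiff ℝ 2 (uncurry V)) (hW : ContDiff ℝ 2 (uncurry W)) (s φ : ℝ) :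
    flatLap (fun s φ => V s φ + W s φ) s φ = flatLap V s φ + flatLap W s φ := by
  have hleft := deriv_deriv_add (contDiff_slice_left hV φ) (contDiff_slice_left hW φ) s
  have hright := deriv_deriv_add (contDiff_slice_right hV s) (contDiff_slice_right hW s) φ
  exact (congrArg₂ (· + ·) hleft hright).trans (add_add_add_comm _ _ _ _)

theorem flatLap_const_mul (c : ℝ) (W : ℝ → ℝ → ℝ) (s φ : ℝ) :
    flatLap (fun s φ => c * W s φ) s φ = c * flatLap W s φ := by
  simp only [flatLap, pdθ, pdφ, deriv_const_mul_field]
  ring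

theorem flatLap_fun_fst_mul (hW : ContDiff ℝ 2 (uncurry W)) {α α' : ℝ → ℝ} {α'' s : ℝ}
    (hα : ∀ t, HasDerivAt α (α' t) t) (hα' : HasDerivAt α' α'' s) (φ : ℝ) :
    flatLap (fun s φ => α s * W s φ) s φ =
      α s * flatLap W s φ + 2 * α' s * pdθ W s φ + α'' * W s φ := by
  have hWs := contDiff_slice_left hW φ
  have hfirst : pdθ (fun s φ => α s * W s φ) = fun s φ => α' s * W s φ + α s * pdθ W s φ := by
    funext t φ
    have hWt := (contDiff_slice_left hW φ).differentiable (by norm_num) t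
    exact ((hα t).mul hWt.hasDerivAt).deriv
  have hsecond : pdθ (fun s φ => α' s * W s φ + α s * pdθ W s φ) s φ =
      α'' * W s φ + α' s * pdθ W s φ + (α' s * pdθ W s φ + α s * pdθ (pdθ W) s φ) :=
    ((hα'.mul (hWs.differentiable (by norm_num) s).hasDerivAt).add
      ((hα s).mul (hWs.differentiable_deriv_two s).hasDerivAt)).deriv
  have hφ : pdφ (pdφ fun s φ => α s * W s φ) s φ = α s * pdφ (pdφ W) s φ := by
    simp only [pdφ, deriv_const_mul_field]
  rw [flatLap, hfirst, hsecond, hφ, flatLap]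
  ring

theorem flatLap_cosh_add_cosh (k l s φ : ℝ) :
    flatLap (fun s φ => cosh (k * s) + cosh (l * φ)) s φ =
      k ^ 2 * cosh (k * s) + l ^ 2 * cosh (l * φ) := by
  simp only [flatLap, pdθ, pdφ, deriv_add_const', deriv_const_add',
    deriv_deriv_cosh_const_mul]

theorem deriv_deriv_comp_line {f : ℂ → ℝ} (hf : ContDiff ℝ 2 f) (z e : ℂ) (t : ℝ) :
    deriv (deriv fun x : ℝ => f (z + x * e)) t = fderiv ℝ (fderiv ℝ f) (z + t * e) e e := by
  have hline : ∀ x : ℝ, HasDerivAt (fun x : ℝ => z + x * e) e x := fun x => by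
    simpa using ((hasDerivAt_id x).ofReal_comp.mul_const e).const_add z
  have hfirst : deriv (fun x : ℝ => f (z + x * e)) = fun x : ℝ => fderiv ℝ f (z + x * e) e :=
    funext fun x =>
      ((hf.differentiable (by norm_num) _).hasFDerivAt.comp_hasDerivAt x (hline x)).deriv
  have hf' : ContDiff ℝ 1 (fderiv ℝ f) := hf.fderiv_right (by norm_num)
  have hsecond := (hf'.differentiable (by norm_num) _).hasFDerivAt.comp_hasDerivAt t (hline t)
  rw [hfirst]
  simpa using (hsecond.clm_apply (hasDerivAt_const t e)).deriv

theorem laplacian_comp_re_im (hW : ContDiff ℝ 2 (uncurry W)) (z : ℂ) :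
    Laplacian.laplacian (fun z : ℂ => W z.re z.im) z = flatLap W z.re z.im := by
  have hf : ContDiff ℝ 2 fun z : ℂ => W z.re z.im :=
    hW.comp (Complex.reCLM.contDiff.prodMk Complex.imCLM.contDiff)
  have hre := deriv_deriv_comp_line hf (z.im * Complex.I) 1 z.re
  have him := deriv_deriv_comp_line hf z.re Complex.I z.im
  rw [mul_one, add_comm, Complex.re_add_im] at hre
  rw [Complex.re_add_im] at him
  rw [InnerProductSpace.laplacian_eq_iteratedFDeriv_complexPlane]
  simp only [iteratedFDeriv_two_apply]
  simpa [flatLap, pdθ, pdφ] using (congrArg₂ (· + ·) hre him).symm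

theorem apply_eq_apply_of_flatLap_eq_zero {C : ℝ} (hW : ContDiff ℝ 2 (uncurry W))
    (hbound : ∀ s φ, |W s φ| ≤ C) (hΔ : ∀ s φ, flatLap W s φ = 0) (s φ s' φ' : ℝ) :
    W s φ = W s' φ' := by
  have hf : ContDiff ℝ 2 fun z : ℂ => W z.re z.im :=
    hW.comp (Complex.reCLM.contDiff.prodMk Complex.imCLM.contDiff)
  refine InnerProductSpace.bounded_harmonic_on_complex_plane_is_constant
    (fun z : ℂ => W z.re z.im) (fun z _ => ⟨hf.contDiffAt, .of_forall fun w => ?_⟩) ?_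
    ⟨s, φ⟩ ⟨s', φ'⟩
  · rw [laplacian_comp_re_im hW, hΔ, Pi.zero_apply]
  · exact isBounded_iff_forall_norm_le.2 ⟨C, forall_mem_range.2 fun z => hbound z.re z.im⟩

theorem nonpos_of_flatLap_pos (hW : ContDiff ℝ 2 (uncurry W))
    (hfar : ∀ᶠ p in cocompact (ℝ × ℝ), uncurry W p ≤ 0)
    (hΔ : ∀ s φ, 0 < W s φ → 0 < flatLap W s φ) (s φ : ℝ) : W s φ ≤ 0 := by
  by_contra! hpos
  obtain ⟨⟨x, y⟩, hmax⟩ : ∃ p, ∀ q, uncurry W q ≤ uncurry W p :=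
    hW.continuous.exists_forall_ge' (s, φ) (hfar.mono fun _ hp => hp.trans hpos.le)
  have hs : deriv (deriv fun t => W t y) x ≤ 0 :=
    deriv_deriv_nonpos_of_isLocalMax (contDiff_slice_left hW y).continuous.continuousAt
      (.of_forall fun t => hmax (t, y))
  have hφ : deriv (deriv (W x)) y ≤ 0 :=
    deriv_deriv_nonpos_of_isLocalMax (contDiff_slice_right hW x).continuous.continuousAt
      (.of_forall fun t => hmax (x, t))
  exact (hΔ x y (hpos.trans_le (hmax (s, φ)))).not_ge (add_nonpos hs hφ)

theorem tendsto_cosh_add_cosh_cocompact {k l : ℝ} (hk : 0 < k) (hl : 0 < l) :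
    Tendsto (fun p : ℝ × ℝ => cosh (k * p.1) + cosh (l * p.2)) (cocompact _) atTop := by
  refine tendsto_atTop_mono (fun p => ?_)
    (tendsto_norm_cocompact_atTop.const_mul_atTop (lt_min hk hl))
  have hcosh : ∀ {m x : ℝ}, 0 < m → m * |x| ≤ cosh (m * x) := fun {m x} hm => by
    simpa [abs_mul, abs_of_pos hm] using abs_le_cosh (m * x)
  rw [Prod.norm_def, norm_eq_abs, norm_eq_abs]
  rcases max_choice |p.1| |p.2| with h | h <;> rw [h]
  · have := mul_le_mul_of_nonneg_right (min_le_left k l) (abs_nonneg p.1)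
    linarith [hcosh (x := p.1) hk, cosh_pos (l * p.2)]
  · have := mul_le_mul_of_nonneg_right (min_le_right k l) (abs_nonneg p.2)
    linarith [hcosh (x := p.2) hl, cosh_pos (k * p.1)]

theorem nonpos_of_sq_mul_le_flatLap {k : ℝ} (hk : 0 < k) (hW : ContDiff ℝ 2 (uncurry W))
    (hgrowth : ∀ ε > 0, ∃ K, ∀ s φ, W s φ ≤ ε * cosh (k * s) + K)
    (hΔ : ∀ s φ, k ^ 2 * W s φ ≤ flatLap W s φ) (s φ : ℝ) : W s φ ≤ 0 := by
  -- `B` is a strict supersolution that also grows in `φ`, in which `W` is merely bounded.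
  set B : ℝ → ℝ → ℝ := fun s φ => cosh (k * s) + cosh (k / 2 * φ) with hB
  have hBpos : ∀ s φ, 0 < B s φ := fun s φ => add_pos (cosh_pos _) (cosh_pos _)
  have hBsmooth : ContDiff ℝ 2 (uncurry B) :=
    (contDiff_cosh.comp (contDiff_const.mul contDiff_fst)).add
      (contDiff_cosh.comp (contDiff_const.mul contDiff_snd))
  have hBsuper : ∀ s φ, flatLap B s φ < k ^ 2 * B s φ := fun s φ => by
    rw [hB, flatLap_cosh_add_cosh]
    nlinarith [mul_pos (pow_pos hk 2) (cosh_pos (k / 2 * φ))]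
  have hcompare : ∀ ε > 0, W s φ ≤ ε * B s φ := by
    intro ε hε
    obtain ⟨K, hK⟩ := hgrowth (ε / 2) (half_pos hε)
    suffices W s φ + -ε * B s φ ≤ 0 by linarith
    refine nonpos_of_flatLap_pos (W := fun s φ => W s φ + -ε * B s φ)
      (hW.add (contDiff_const.mul hBsmooth)) ?_ (fun s φ hpos => ?_) s φ
    · filter_upwards [(tendsto_cosh_add_cosh_cocompact hk (half_pos hk)).eventually_ge_atTop
        (K / (ε / 2))] with ⟨s, φ⟩ hfar
      rw [div_le_iff₀ (half_pos hε)] at hfar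
      have := mul_pos (half_pos hε) (cosh_pos (k / 2 * φ))
      change W s φ + -ε * (cosh (k * s) + cosh (k / 2 * φ)) ≤ 0
      simp only at hfar
      linarith [hK s φ]
    · rw [flatLap_add hW (contDiff_const.mul hBsmooth), flatLap_const_mul]
      nlinarith [hΔ s φ, hBsuper s φ, pow_pos hk 2]
  refine le_of_forall_pos_le_add fun δ hδ => ?_
  simpa [(hBpos s φ).ne'] using hcompare (δ / B s φ) (div_pos hδ (hBpos s φ))

theorem eq_zero_of_flatLap_eq_sq_mul {k : ℝ} (hk : 0 < k) (hW : ContDiff ℝ 2 (uncurry W))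
    (hgrowth : ∀ ε > 0, ∃ K, ∀ s φ, |W s φ| ≤ ε * cosh (k * s) + K)
    (hΔ : ∀ s φ, flatLap W s φ = k ^ 2 * W s φ) (s φ : ℝ) : W s φ = 0 := by
  refine le_antisymm (nonpos_of_sq_mul_le_flatLap hk hW (fun ε hε => ?_)
    (fun s φ => (hΔ s φ).ge) s φ) ?_
  · exact (hgrowth ε hε).imp fun K hK s φ => (le_abs_self _).trans (hK s φ)
  · have hneg := nonpos_of_sq_mul_le_flatLap (W := fun s φ => -1 * W s φ) hk
      (contDiff_const.mul hW)
      (fun ε hε => (hgrowth ε hε).imp fun K hK s φ => by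
        linarith [neg_abs_le (W s φ), hK s φ])
      (fun s φ => by rw [flatLap_const_mul, hΔ]; linarith) s φ
    linarith

end flatLap

theorem exists_forall_mul_abs_le_of_tendstoUniformly_zero {X ι : Type*} [TopologicalSpace X]
    {w : X → ℝ} {f : X → ι → ℝ} {C : ℝ} (hw : Continuous w) (hw0 : ∀ x, 0 ≤ w x)
    (hbound : ∀ x i, |f x i| ≤ C) (hlim : TendstoUniformly f 0 (cocompact X)) {ε : ℝ}
    (hε : 0 < ε) : ∃ K, ∀ x i, w x * |f x i| ≤ ε * w x + K := by
  obtain ⟨t, ht, hfar⟩ := mem_cocompact.1 (Metric.tendstoUniformly_iff.1 hlim ε hε)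
  obtain ⟨M, hM⟩ := ht.exists_bound_of_continuousOn hw.continuousOn
  refine ⟨max (M * C) 0, fun x i => ?_⟩
  by_cases hx : x ∈ t
  · have hle : w x * |f x i| ≤ M * C :=
      mul_le_mul ((le_norm_self _).trans (hM x hx)) (hbound x i) (abs_nonneg _)
        ((norm_nonneg _).trans (hM x hx))
    linarith [mul_nonneg hε.le (hw0 x), le_max_left (M * C) 0]
  · have hlt : |f x i| < ε := by simpa using hfar hx i
    nlinarith [hw0 x, le_max_right (M * C) 0]

theorem contDiff_tanh_two_mul : ContDiff ℝ 2 fun s => tanh (2 * s) :=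
  contDiff_tanh.comp (contDiff_const.mul contDiff_id)

theorem contDiff_sinh_two_mul : ContDiff ℝ 2 fun s => sinh (2 * s) :=
  contDiff_sinh.comp (contDiff_const.mul contDiff_id)

theorem contDiff_neg_inv_cosh_two_mul : ContDiff ℝ 2 fun s => -(cosh (2 * s))⁻¹ :=
  ((contDiff_cosh.comp (contDiff_const.mul contDiff_id)).inv fun _ => (cosh_pos _).ne').neg

/-- The `C²` Jacobi fields `(P, Q)`, as functions on the flat `(s, φ)`-plane, of the harmonic map
`(s, φ) ↦ (½ log cosh 2s, ½ tanh 2s)`, a unit-speed geodesic of the hyperbolic plane with metric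
`du² + e^{4u} dv²`. -/
structure IsJacobiField (P Q : ℝ → ℝ → ℝ) : Prop where
  contDiff_left : ContDiff ℝ 2 (uncurry P)
  contDiff_right : ContDiff ℝ 2 (uncurry Q)
  flatLap_left (s φ : ℝ) : flatLap P s φ = 8 * (cosh (2 * s) ^ 2)⁻¹ * P s φ + 4 * pdθ Q s φ
  flatLap_right (s φ : ℝ) :
    flatLap Q s φ = -4 * tanh (2 * s) * pdθ Q s φ - 4 * (cosh (2 * s) ^ 2)⁻¹ * pdθ P s φ

/-- The component of `(P, Q)` along the unit tangent `tanh 2s ∂_u + (cosh 2s)⁻² ∂_v` of the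
geodesic. -/
def tangentialPart (P Q : ℝ → ℝ → ℝ) (s φ : ℝ) : ℝ := tanh (2 * s) * P s φ + Q s φ

/-- The component of `(P, Q)` along the unit normal `-(cosh 2s)⁻¹ ∂_u + tanh 2s (cosh 2s)⁻¹ ∂_v`
of the geodesic. -/
def normalPart (P Q : ℝ → ℝ → ℝ) (s φ : ℝ) : ℝ :=
  sinh (2 * s) * Q s φ + -(cosh (2 * s))⁻¹ * P s φ

namespace IsJacobiField

variable {P Q : ℝ → ℝ → ℝ}

theorem contDiff_tangentialPart (h : IsJacobiField P Q) :
    ContDiff ℝ 2 (uncurry (tangentialPart P Q)) :=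
  (contDiff_fun_fst_mul contDiff_tanh_two_mul h.contDiff_left).add h.contDiff_right

theorem contDiff_normalPart (h : IsJacobiField P Q) :
    ContDiff ℝ 2 (uncurry (normalPart P Q)) :=
  (contDiff_fun_fst_mul contDiff_sinh_two_mul h.contDiff_right).add
    (contDiff_fun_fst_mul contDiff_neg_inv_cosh_two_mul h.contDiff_left)

theorem flatLap_tangentialPart (h : IsJacobiField P Q) (s φ : ℝ) :
    flatLap (tangentialPart P Q) s φ = 0 := by
  have hT (t : ℝ) : HasDerivAt (fun t => tanh (2 * t)) (2 * (cosh (2 * t) ^ 2)⁻¹) t :=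
    hasDerivAt_comp_const_mul (hasDerivAt_tanh _)
  have hT' : HasDerivAt (fun t => 2 * (cosh (2 * t) ^ 2)⁻¹)
      (2 * (2 * (-2 * tanh (2 * s) * (cosh (2 * s) ^ 2)⁻¹))) s :=
    (hasDerivAt_comp_const_mul (hasDerivAt_inv_cosh_sq _)).const_mul 2
  unfold tangentialPart
  rw [flatLap_add (contDiff_fun_fst_mul contDiff_tanh_two_mul h.contDiff_left) h.contDiff_right,
    flatLap_fun_fst_mul h.contDiff_left hT hT', h.flatLap_left, h.flatLap_right]
  ring

theorem flatLap_normalPart (h : IsJacobiField P Q) (s φ : ℝ) :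
    flatLap (normalPart P Q) s φ = 2 ^ 2 * normalPart P Q s φ := by
  have hcosh (t : ℝ) := hasDerivAt_comp_const_mul (hasDerivAt_cosh (2 * t))
  have hsinh (t : ℝ) := hasDerivAt_comp_const_mul (hasDerivAt_sinh (2 * t))
  have hsech (t : ℝ) : HasDerivAt (fun t => -(cosh (2 * t))⁻¹)
      (2 * sinh (2 * t) * (cosh (2 * t) ^ 2)⁻¹) t :=
    ((hcosh t).fun_inv (cosh_pos _).ne').fun_neg.congr_deriv (by ring)
  have hsech' : HasDerivAt (fun t => 2 * sinh (2 * t) * (cosh (2 * t) ^ 2)⁻¹)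
      (8 * (cosh (2 * s) ^ 3)⁻¹ - 4 * (cosh (2 * s))⁻¹) s := by
    have hS := hasDerivAt_comp_const_mul (hasDerivAt_inv_cosh_sq (2 * s))
    refine (((hsinh s).const_mul 2).fun_mul hS).congr_deriv ?_
    rw [tanh_eq_sinh_div_cosh]
    field_simp
    linear_combination 8 * cosh_sq (2 * s)
  unfold normalPart
  rw [flatLap_add (contDiff_fun_fst_mul contDiff_sinh_two_mul h.contDiff_right)
      (contDiff_fun_fst_mul contDiff_neg_inv_cosh_two_mul h.contDiff_left),
    flatLap_fun_fst_mul h.contDiff_right hsinh ((hcosh s).const_mul 2),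
    flatLap_fun_fst_mul h.contDiff_left hsech hsech', h.flatLap_left, h.flatLap_right,
    tanh_eq_sinh_div_cosh]
  field_simp
  linear_combination 4 * cosh (2 * s) ^ 2 * pdθ Q s φ * cosh_sq (2 * s)

theorem tangentialPart_eq_tangentialPart (h : IsJacobiField P Q) {C₁ C₂ : ℝ}
    (hP : ∀ s φ, |P s φ| ≤ C₁) (hQ : ∀ s φ, |Q s φ| ≤ C₂) (s φ s' φ' : ℝ) :
    tangentialPart P Q s φ = tangentialPart P Q s' φ' := by
  refine apply_eq_apply_of_flatLap_eq_zero (C := C₁ + C₂) h.contDiff_tangentialPart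
    (fun s φ => ?_) h.flatLap_tangentialPart s φ s' φ'
  calc |tanh (2 * s) * P s φ + Q s φ| ≤ |tanh (2 * s)| * |P s φ| + |Q s φ| := by
        simpa only [abs_mul] using abs_add_le (tanh (2 * s) * P s φ) (Q s φ)
    _ ≤ C₁ + C₂ := add_le_add ((mul_le_of_le_one_left (abs_nonneg _)
        (abs_tanh_lt_one _).le).trans (hP s φ)) (hQ s φ)

theorem normalPart_eq_zero (h : IsJacobiField P Q) {C₁ C₂ : ℝ} (hP : ∀ s φ, |P s φ| ≤ C₁)
    (hQ : ∀ s φ, |Q s φ| ≤ C₂) (hlim : TendstoUniformly Q 0 (cocompact ℝ)) (s φ : ℝ) :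
    normalPart P Q s φ = 0 := by
  refine eq_zero_of_flatLap_eq_sq_mul two_pos h.contDiff_normalPart (fun ε hε => ?_)
    h.flatLap_normalPart s φ
  obtain ⟨K, hK⟩ := exists_forall_mul_abs_le_of_tendstoUniformly_zero
    (w := fun s => cosh (2 * s)) (by fun_prop) (fun s => (cosh_pos _).le) hQ hlim hε
  refine ⟨K + C₁, fun s φ => ?_⟩
  have hsech : (cosh (2 * s))⁻¹ ≤ 1 := inv_le_one_of_one_le₀ (one_le_cosh _)
  calc |sinh (2 * s) * Q s φ + -(cosh (2 * s))⁻¹ * P s φ|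
      ≤ |sinh (2 * s)| * |Q s φ| + (cosh (2 * s))⁻¹ * |P s φ| := by
        simpa only [abs_mul, abs_neg, abs_inv, abs_of_pos (cosh_pos _)] using
          abs_add_le (sinh (2 * s) * Q s φ) (-(cosh (2 * s))⁻¹ * P s φ)
    _ ≤ cosh (2 * s) * |Q s φ| + 1 * C₁ := by
        gcongr
        exacts [abs_sinh_le_cosh _, hP s φ]
    _ ≤ ε * cosh (2 * s) + (K + C₁) := by linarith [hK s φ]

theorem exists_eq_const_mul (h : IsJacobiField P Q) {C₁ C₂ : ℝ} (hP : ∀ s φ, |P s φ| ≤ C₁)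
    (hQ : ∀ s φ, |Q s φ| ≤ C₂) (hlim : TendstoUniformly Q 0 (cocompact ℝ)) :
    ∃ κ, ∀ s φ, P s φ = κ * tanh (2 * s) ∧ Q s φ = κ * (cosh (2 * s) ^ 2)⁻¹ := by
  refine ⟨tangentialPart P Q 0 0, fun s φ => ?_⟩
  have htangential := h.tangentialPart_eq_tangentialPart hP hQ s φ 0 0
  have hnormal := h.normalPart_eq_zero hP hQ hlim s φ
  rw [← htangential]
  unfold tangentialPart normalPart at *
  have hP_eq : P s φ = sinh (2 * s) * cosh (2 * s) * Q s φ := by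
    field_simp at hnormal
    linear_combination -hnormal
  rw [hP_eq, tanh_eq_sinh_div_cosh]
  constructor
  · field_simp
    linear_combination sinh (2 * s) * Q s φ * cosh_sq (2 * s)
  · field_simp
    linear_combination Q s φ * cosh_sq (2 * s)

end IsJacobiField

/-- The polar angle on the sphere as a function of the Mercator coordinate `s`, the conformal
parameter along the meridians, normalised so that the equator is `s = c`. It decreases from `π` at
`s = -∞` to `0` at `s = ∞`. -/
def polarAngle (c s : ℝ) : ℝ := π / 2 - arctan (sinh (s - c))

theorem polarAngle_mem_Ioo (c s : ℝ) : polarAngle c s ∈ Ioo 0 π := by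
  obtain ⟨hlower, hupper⟩ := arctan_mem_Ioo (sinh (s - c))
  constructor <;> unfold polarAngle <;> linarith

theorem exists_polarAngle_eq (c : ℝ) {θ : ℝ} (hθ : θ ∈ Ioo 0 π) : ∃ s, polarAngle c s = θ := by
  refine ⟨arsinh (tan (π / 2 - θ)) + c, ?_⟩
  rw [polarAngle, add_sub_cancel_right, sinh_arsinh, arctan_tan] <;> linarith [hθ.1, hθ.2]

theorem sqrt_one_add_sinh_sq (x : ℝ) : √(1 + sinh x ^ 2) = cosh x := by
  rw [← cosh_sq', sqrt_sq (cosh_pos x).le]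

theorem cos_polarAngle (c s : ℝ) : cos (polarAngle c s) = sinh (s - c) / cosh (s - c) := by
  rw [polarAngle, cos_pi_div_two_sub, sin_arctan, sqrt_one_add_sinh_sq]

theorem sin_polarAngle (c s : ℝ) : sin (polarAngle c s) = (cosh (s - c))⁻¹ := by
  rw [polarAngle, sin_pi_div_two_sub, cos_arctan, sqrt_one_add_sinh_sq, one_div]

theorem hasDerivAt_polarAngle (c s : ℝ) :
    HasDerivAt (polarAngle c) (-sin (polarAngle c s)) s := by
  have hsinh : HasDerivAt (fun s => sinh (s - c)) (cosh (s - c)) s :=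
    (hasDerivAt_sinh (s - c)).comp_sub_const s c
  refine (hsinh.arctan.const_sub (π / 2)).congr_deriv ?_
  rw [sin_polarAngle, ← cosh_sq']
  field_simp

theorem contDiff_polarAngle (c : ℝ) : ContDiff ℝ 2 (polarAngle c) :=
  contDiff_const.sub
    (contDiff_arctan.comp (contDiff_sinh.comp (contDiff_id.sub contDiff_const)))

theorem tendsto_polarAngle_atTop (c : ℝ) : Tendsto (polarAngle c) atTop (𝓝[>] 0) := by
  have hsinh : Tendsto (fun s => sinh (s - c)) atTop atTop :=
    sinhOrderIso.tendsto_atTop.comp (tendsto_atTop_add_const_right _ (-c) tendsto_id)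
  have harctan := tendsto_nhds_of_tendsto_nhdsWithin (tendsto_arctan_atTop.comp hsinh)
  refine tendsto_nhdsWithin_of_tendsto_nhds_of_eventually_within _ ?_
    (.of_forall fun s => (polarAngle_mem_Ioo c s).1)
  exact sub_self (π / 2) ▸ harctan.const_sub (π / 2)

theorem tendsto_polarAngle_atBot (c : ℝ) : Tendsto (polarAngle c) atBot (𝓝[<] π) := by
  have hsinh : Tendsto (fun s => sinh (s - c)) atBot atBot :=
    sinhOrderIso.tendsto_atBot.comp (tendsto_atBot_add_const_right _ (-c) tendsto_id)
  have harctan := tendsto_nhds_of_tendsto_nhdsWithin (tendsto_arctan_atBot.comp hsinh)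
  refine tendsto_nhdsWithin_of_tendsto_nhds_of_eventually_within _ ?_
    (.of_forall fun s => (polarAngle_mem_Ioo c s).2)
  have hhalves : π / 2 - -(π / 2) = π := by ring
  exact hhalves ▸ harctan.const_sub (π / 2)

section Mercator

variable {ψ : ℝ → ℝ → ℝ}

theorem contDiff_comp_polarAngle
    (hψ : ContDiffOn ℝ 2 (fun p : ℝ × ℝ => ψ p.1 p.2) (Ioo 0 π ×ˢ univ)) (c : ℝ) :
    ContDiff ℝ 2 (uncurry fun s φ => ψ (polarAngle c s) φ) :=
  hψ.comp_contDiff (((contDiff_polarAngle c).comp contDiff_fst).prodMk contDiff_snd)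
    fun p => ⟨polarAngle_mem_Ioo c p.1, mem_univ p.2⟩

theorem contDiffOn_slice_left {n : WithTop ℕ∞}
    (hψ : ContDiffOn ℝ n (fun p : ℝ × ℝ => ψ p.1 p.2) (Ioo 0 π ×ˢ univ)) (φ : ℝ) :
    ContDiffOn ℝ n (fun θ => ψ θ φ) (Ioo 0 π) :=
  hψ.comp (contDiff_id.prodMk contDiff_const).contDiffOn fun _ hθ => ⟨hθ, mem_univ φ⟩

theorem differentiableAt_slice_left {n : WithTop ℕ∞}
    (hψ : ContDiffOn ℝ n (fun p : ℝ × ℝ => ψ p.1 p.2) (Ioo 0 π ×ˢ univ)) (hn : n ≠ 0) {θ : ℝ}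
    (hθ : θ ∈ Ioo 0 π) (φ : ℝ) : DifferentiableAt ℝ (fun θ => ψ θ φ) θ :=
  ((contDiffOn_slice_left hψ φ).differentiableOn hn).differentiableAt
    (isOpen_Ioo.mem_nhds hθ)

theorem pdθ_comp_polarAngle {c s φ : ℝ}
    (hψ : DifferentiableAt ℝ (fun θ => ψ θ φ) (polarAngle c s)) :
    pdθ (fun s φ => ψ (polarAngle c s) φ) s φ =
      -sin (polarAngle c s) * pdθ ψ (polarAngle c s) φ :=
  (hψ.hasDerivAt.comp s (hasDerivAt_polarAngle c s)).deriv.trans (mul_comm _ _)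

theorem flatLap_comp_polarAngle
    (hψ : ContDiffOn ℝ 2 (fun p : ℝ × ℝ => ψ p.1 p.2) (Ioo 0 π ×ˢ univ)) (c s φ : ℝ) :
    flatLap (fun s φ => ψ (polarAngle c s) φ) s φ =
      sin (polarAngle c s) ^ 2 * lapS2 ψ (polarAngle c s) φ := by
  have hmem := polarAngle_mem_Ioo c s
  have hsin := (sin_pos_of_mem_Ioo hmem).ne'
  have hfirst : (fun t => pdθ (fun s φ => ψ (polarAngle c s) φ) t φ) =
      fun t => -sin (polarAngle c t) * pdθ ψ (polarAngle c t) φ := funext fun t =>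
    pdθ_comp_polarAngle (differentiableAt_slice_left hψ two_ne_zero (polarAngle_mem_Ioo c t) φ)
  have hψ' : DifferentiableAt ℝ (fun θ => pdθ ψ θ φ) (polarAngle c s) :=
    (((contDiffOn_slice_left hψ φ).deriv_of_isOpen (m := 1) isOpen_Ioo
      (by norm_num)).differentiableOn (by norm_num)).differentiableAt (isOpen_Ioo.mem_nhds hmem)
  have hϑ := hasDerivAt_polarAngle c s
  have hsecond := (hϑ.sin.fun_neg.fun_mul (hψ'.hasDerivAt.comp s hϑ)).deriv
  have hs : pdθ (pdθ fun s φ => ψ (polarAngle c s) φ) s φ =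
      sin (polarAngle c s) ^ 2 * pdθ (pdθ ψ) (polarAngle c s) φ +
        sin (polarAngle c s) * cos (polarAngle c s) * pdθ ψ (polarAngle c s) φ := by
    change deriv (fun t => pdθ (fun s φ => ψ (polarAngle c s) φ) t φ) s = _
    rw [hfirst]
    refine hsecond.trans ?_
    simp only [pdθ, Function.comp_apply]
    ring
  rw [flatLap, hs, lapS2]
  field_simp
  rfl

theorem sin_sq_mul_gradDotS2_comp_polarAngle {v : ℝ → ℝ} {c s φ : ℝ}
    (hv : DifferentiableAt ℝ v (polarAngle c s))
    (hψ : DifferentiableAt ℝ (fun θ => ψ θ φ) (polarAngle c s)) :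
    sin (polarAngle c s) ^ 2 * gradDotS2 (fun θ _ => v θ) ψ (polarAngle c s) φ =
      deriv (fun s => v (polarAngle c s)) s * pdθ (fun s φ => ψ (polarAngle c s) φ) s φ := by
  have hderiv : deriv (fun s => v (polarAngle c s)) s =
      -sin (polarAngle c s) * deriv v (polarAngle c s) :=
    pdθ_comp_polarAngle (ψ := fun θ _ => v θ) (φ := φ) hv
  rw [hderiv, pdθ_comp_polarAngle hψ]
  simp only [gradDotS2, pdθ, pdφ, deriv_const]
  ring

end Mercator

section background

variable {a b θ : ℝ}

theorem one_add_cos_sq_add_pos (hb : b ∈ Ioo (-1) 1) (θ : ℝ) :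
    0 < 1 + cos θ ^ 2 + 2 * b * cos θ := by
  nlinarith [sq_nonneg (cos θ + b), mul_pos (sub_pos.2 hb.2) (neg_lt_iff_pos_add.1 hb.1)]

theorem differentiableAt_uab (ha : 0 < a) (hb : b ∈ Ioo (-1) 1) (hθ : θ ∈ Ioo 0 π) :
    DifferentiableAt ℝ (uab a b) θ := by
  have hsqrt : 0 < √(1 - b ^ 2) := sqrt_pos.2 (sub_pos.2 (sq_lt_one_iff_abs_lt_one b |>.2
    (abs_lt.2 hb)))
  have hden := (one_add_cos_sq_add_pos hb θ).ne'
  have hsin := (sin_pos_of_mem_Ioo hθ).ne'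
  unfold uab
  fun_prop (disch := positivity)

theorem differentiableAt_vab (hb : b ∈ Ioo (-1) 1) (θ : ℝ) : DifferentiableAt ℝ (vab a b) θ := by
  have hden := (one_add_cos_sq_add_pos hb θ).ne'
  unfold vab
  fun_prop (disch := assumption)

theorem one_add_cos_polarAngle_sq_add (c s : ℝ) :
    1 + cos (polarAngle c s) ^ 2 + 2 * tanh (2 * c) * cos (polarAngle c s) =
      cosh (2 * s) / (cosh (2 * c) * cosh (s - c) ^ 2) := by
  have hs : 2 * s = 2 * (s - c) + 2 * c := by ring
  rw [hs, cosh_add, cosh_two_mul (s - c), sinh_two_mul (s - c), cos_polarAngle,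
    tanh_eq_sinh_div_cosh]
  field_simp

theorem vab_polarAngle (a c s : ℝ) : vab a (tanh (2 * c)) (polarAngle c s) = a * tanh (2 * s) := by
  have hs : 2 * s = 2 * (s - c) + 2 * c := by ring
  have hsinh : sinh (2 * s) = cosh (2 * c) * cosh (s - c) ^ 2 * (tanh (2 * c) +
      tanh (2 * c) * cos (polarAngle c s) ^ 2 + 2 * cos (polarAngle c s)) := by
    rw [hs, sinh_add, cosh_two_mul (s - c), sinh_two_mul (s - c), cos_polarAngle,
      tanh_eq_sinh_div_cosh]
    field_simp
    ring
  rw [vab, one_add_cos_polarAngle_sq_add, tanh_eq_sinh_div_cosh (2 * s), hsinh]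
  field_simp

theorem one_sub_tanh_sq (x : ℝ) : 1 - tanh x ^ 2 = (cosh x ^ 2)⁻¹ := by
  rw [tanh_eq_sinh_div_cosh]
  field_simp
  linarith [cosh_sq x]

theorem uab_polarAngle (ha : 0 < a) (c s : ℝ) :
    uab a (tanh (2 * c)) (polarAngle c s) = 1 / 2 * log (cosh (2 * s) / (2 * a)) := by
  have hratio : 2 * a * √(1 - tanh (2 * c) ^ 2) / (1 + cos (polarAngle c s) ^ 2 +
      2 * tanh (2 * c) * cos (polarAngle c s)) =
        cosh (s - c) ^ 2 / (cosh (2 * s) / (2 * a)) := by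
    rw [one_add_cos_polarAngle_sq_add, one_sub_tanh_sq, sqrt_inv, sqrt_sq (cosh_pos _).le]
    field_simp
  rw [uab, hratio, sin_polarAngle, log_inv, log_div (by positivity) (by positivity), log_pow]
  push_cast
  ring

theorem exp_four_mul_uab_polarAngle (ha : 0 < a) (c s : ℝ) :
    exp (4 * uab a (tanh (2 * c)) (polarAngle c s)) = (cosh (2 * s) / (2 * a)) ^ 2 := by
  have hpos : 0 < cosh (2 * s) / (2 * a) := by positivity
  rw [uab_polarAngle ha, ← exp_log hpos, ← exp_nat_mul, log_exp]
  congr 1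
  push_cast
  ring

theorem deriv_uab_polarAngle (ha : 0 < a) (c s : ℝ) :
    deriv (fun s => uab a (tanh (2 * c)) (polarAngle c s)) s = tanh (2 * s) := by
  simp only [uab_polarAngle ha]
  have hcosh := hasDerivAt_comp_const_mul (hasDerivAt_cosh (2 * s))
  refine (((hcosh.div_const (2 * a)).log (by positivity)).const_mul (1 / 2)).deriv.trans ?_
  rw [tanh_eq_sinh_div_cosh]
  field_simp

theorem deriv_vab_polarAngle (a c s : ℝ) :
    deriv (fun s => vab a (tanh (2 * c)) (polarAngle c s)) s = 2 * a * (cosh (2 * s) ^ 2)⁻¹ := by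
  simp only [vab_polarAngle]
  refine ((hasDerivAt_comp_const_mul (hasDerivAt_tanh (2 * s))).const_mul a).deriv.trans ?_
  ring

end background

/-- The linearized harmonic map equations at `(u_{a,b}, v_{a,b})`, on the sphere minus its poles. -/
structure IsLinearizedHarmonic (a b : ℝ) (ψ₁ ψ₂ : ℝ → ℝ → ℝ) : Prop where
  eq_left : ∀ θ ∈ Ioo (0 : ℝ) π, ∀ φ : ℝ,
    lapS2 ψ₁ θ φ
      - 8 * exp (4 * uab a b θ) * gradNormSqS2 (fun θ' _ => vab a b θ') θ φ * ψ₁ θ φ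
      - 4 * exp (4 * uab a b θ) * gradDotS2 (fun θ' _ => vab a b θ') ψ₂ θ φ = 0
  eq_right : ∀ θ ∈ Ioo (0 : ℝ) π, ∀ φ : ℝ,
    lapS2 ψ₂ θ φ
      + 4 * gradDotS2 (fun θ' _ => uab a b θ') ψ₂ θ φ
      + 4 * gradDotS2 (fun θ' _ => vab a b θ') ψ₁ θ φ = 0

section transfer

variable {a b : ℝ} {ψ₁ ψ₂ : ℝ → ℝ → ℝ}

theorem IsLinearizedHarmonic.isJacobiField {c : ℝ} (ha : 0 < a)
    (h : IsLinearizedHarmonic a (tanh (2 * c)) ψ₁ ψ₂)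
    (hψ₁ : ContDiffOn ℝ 2 (fun p : ℝ × ℝ => ψ₁ p.1 p.2) (Ioo 0 π ×ˢ univ))
    (hψ₂ : ContDiffOn ℝ 2 (fun p : ℝ × ℝ => ψ₂ p.1 p.2) (Ioo 0 π ×ˢ univ)) :
    IsJacobiField (fun s φ => ψ₁ (polarAngle c s) φ)
      (fun s φ => (2 * a)⁻¹ * ψ₂ (polarAngle c s) φ) := by
  have ha2 : (2 * a)⁻¹ * (2 * a) = 1 := inv_mul_cancel₀ (by positivity)
  have hb : tanh (2 * c) ∈ Ioo (-1) 1 := ⟨neg_one_lt_tanh _, tanh_lt_one _⟩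
  have hmem := polarAngle_mem_Ioo c
  have hdiff₁ (s φ) := differentiableAt_slice_left hψ₁ two_ne_zero (hmem s) φ
  have hdiff₂ (s φ) := differentiableAt_slice_left hψ₂ two_ne_zero (hmem s) φ
  have hu (s) := differentiableAt_uab ha hb (hmem s)
  have hv (s) := differentiableAt_vab (a := a) hb (polarAngle c s)
  have hpd (s φ) : pdθ (fun s φ => (2 * a)⁻¹ * ψ₂ (polarAngle c s) φ) s φ =
      (2 * a)⁻¹ * pdθ (fun s φ => ψ₂ (polarAngle c s) φ) s φ := deriv_const_mul_field _
  refine ⟨contDiff_comp_polarAngle hψ₁ c, contDiff_const.mul (contDiff_comp_polarAngle hψ₂ c),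
    fun s φ => ?_, fun s φ => ?_⟩
  · have hvv : sin (polarAngle c s) ^ 2 *
        gradNormSqS2 (fun θ _ => vab a (tanh (2 * c)) θ) (polarAngle c s) φ =
          (2 * a * (cosh (2 * s) ^ 2)⁻¹) ^ 2 := by
      rw [gradNormSqS2, sin_sq_mul_gradDotS2_comp_polarAngle (hv s) (hv s), pdθ,
        deriv_vab_polarAngle]
      ring
    have hvψ := sin_sq_mul_gradDotS2_comp_polarAngle (hv s) (hdiff₂ s φ)
    have heq := h.eq_left _ (hmem s) φ
    rw [exp_four_mul_uab_polarAngle ha] at heq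
    rw [deriv_vab_polarAngle] at hvψ
    have hE : (cosh (2 * s) / (2 * a)) ^ 2 * (2 * a * (cosh (2 * s) ^ 2)⁻¹) = (2 * a)⁻¹ := by
      field_simp
    rw [flatLap_comp_polarAngle hψ₁, hpd]
    linear_combination sin (polarAngle c s) ^ 2 * heq +
      (cosh (2 * s) / (2 * a)) ^ 2 * (8 * ψ₁ (polarAngle c s) φ * hvv + 4 * hvψ) +
      (16 * a * (cosh (2 * s) ^ 2)⁻¹ * ψ₁ (polarAngle c s) φ +
        4 * pdθ (fun s φ => ψ₂ (polarAngle c s) φ) s φ) * hE +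
      8 * (cosh (2 * s) ^ 2)⁻¹ * ψ₁ (polarAngle c s) φ * ha2
  · have huψ := sin_sq_mul_gradDotS2_comp_polarAngle (hu s) (hdiff₂ s φ)
    have hvψ := sin_sq_mul_gradDotS2_comp_polarAngle (hv s) (hdiff₁ s φ)
    rw [deriv_uab_polarAngle ha] at huψ
    rw [deriv_vab_polarAngle] at hvψ
    rw [flatLap_const_mul, flatLap_comp_polarAngle hψ₂, hpd]
    linear_combination
      (2 * a)⁻¹ * (sin (polarAngle c s) ^ 2 * h.eq_right _ (hmem s) φ - 4 * huψ - 4 * hvψ) -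
      4 * (cosh (2 * s) ^ 2)⁻¹ * pdθ (fun s φ => ψ₁ (polarAngle c s) φ) s φ * ha2

theorem tendstoUniformly_comp_polarAngle {ψ : ℝ → ℝ → ℝ} (hN : TendstoUniformly ψ 0 (𝓝[>] 0))
    (hS : TendstoUniformly ψ 0 (𝓝[<] π)) (c : ℝ) :
    TendstoUniformly (fun s => ψ (polarAngle c s)) 0 (cocompact ℝ) := fun u hu => by
  rw [cocompact_eq_atBot_atTop, eventually_sup]
  exact ⟨(tendsto_polarAngle_atBot c).eventually (hS u hu),
    (tendsto_polarAngle_atTop c).eventually (hN u hu)⟩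

theorem two_mul_one_sub_sq_mul_eq_vab (hb : b ∈ Ioo (-1) 1) (θ : ℝ) :
    2 * (1 - b ^ 2) * (b / (2 * (1 - b ^ 2)) + cos θ / (1 + cos θ ^ 2 + 2 * b * cos θ)) =
      vab 1 b θ := by
  have hb' : 1 - b ^ 2 ≠ 0 := (sub_pos.2 ((sq_lt_one_iff_abs_lt_one b).2 (abs_lt.2 hb))).ne'
  have hden := (one_add_cos_sq_add_pos hb θ).ne'
  rw [vab]
  field_simp
  ring

theorem sin_polarAngle_pow_four_div (c s : ℝ) :
    (1 - tanh (2 * c) ^ 2) * (sin (polarAngle c s) ^ 4 / (1 + cos (polarAngle c s) ^ 2 +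
      2 * tanh (2 * c) * cos (polarAngle c s)) ^ 2) = (cosh (2 * s) ^ 2)⁻¹ := by
  rw [one_sub_tanh_sq, one_add_cos_polarAngle_sq_add, sin_polarAngle]
  field_simp

theorem statement_2_general (ha : 0 < a) (hb : b ∈ Ioo (-1) 1)
    (hψ₁ : ContDiffOn ℝ 2 (fun p : ℝ × ℝ => ψ₁ p.1 p.2) (Ioo 0 π ×ˢ univ))
    (hψ₂ : ContDiffOn ℝ 2 (fun p : ℝ × ℝ => ψ₂ p.1 p.2) (Ioo 0 π ×ˢ univ))
    (hbdd₁ : ∃ C, ∀ θ ∈ Ioo 0 π, ∀ φ, |ψ₁ θ φ| ≤ C)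
    (hbdd₂ : ∃ C, ∀ θ ∈ Ioo 0 π, ∀ φ, |ψ₂ θ φ| ≤ C)
    (hN : TendstoUniformly ψ₂ 0 (𝓝[>] 0)) (hS : TendstoUniformly ψ₂ 0 (𝓝[<] π))
    (heq : IsLinearizedHarmonic a b ψ₁ ψ₂) :
    ∃ lam : ℝ, ∀ θ ∈ Ioo 0 π, ∀ φ,
      ψ₁ θ φ = lam * (b / (2 * (1 - b ^ 2)) + cos θ / (1 + cos θ ^ 2 + 2 * b * cos θ)) ∧
      ψ₂ θ φ = lam * a * sin θ ^ 4 / (1 + cos θ ^ 2 + 2 * b * cos θ) ^ 2 := by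
  obtain ⟨c, rfl⟩ : ∃ c, tanh (2 * c) = b :=
    ⟨artanh b / 2, by rw [mul_div_cancel₀ _ two_ne_zero, tanh_artanh hb]⟩
  obtain ⟨C₁, hC₁⟩ := hbdd₁
  obtain ⟨C₂, hC₂⟩ := hbdd₂
  have hlim : TendstoUniformly (fun s φ => (2 * a)⁻¹ * ψ₂ (polarAngle c s) φ) 0 (cocompact ℝ) := by
    have hmul : UniformContinuous fun x : ℝ => (2 * a)⁻¹ * x := uniformContinuous_const_mul
    have hzero : (fun x : ℝ => (2 * a)⁻¹ * x) ∘ (0 : ℝ → ℝ) = 0 := funext fun _ => mul_zero _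
    exact hzero ▸ hmul.comp_tendstoUniformly (tendstoUniformly_comp_polarAngle hN hS c)
  obtain ⟨κ, hκ⟩ := (heq.isJacobiField ha hψ₁ hψ₂).exists_eq_const_mul (C₂ := (2 * a)⁻¹ * C₂)
    (fun s φ => hC₁ _ (polarAngle_mem_Ioo c s) φ) (fun s φ => by
      rw [abs_mul, abs_of_pos (by positivity)]
      gcongr
      exact hC₂ _ (polarAngle_mem_Ioo c s) φ) hlim
  refine ⟨κ * (2 * (1 - tanh (2 * c) ^ 2)), fun θ hθ φ => ?_⟩
  obtain ⟨s, rfl⟩ := exists_polarAngle_eq c hθ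
  obtain ⟨h₁, h₂⟩ := hκ s φ
  constructor
  · rw [h₁, mul_assoc, two_mul_one_sub_sq_mul_eq_vab hb, vab_polarAngle, one_mul]
  · rw [inv_mul_eq_iff_eq_mul₀ (by positivity)] at h₂
    rw [h₂, ← sin_polarAngle_pow_four_div c s]
    ring

end transfer

theorem covNorm_zero (ψ : ℝ → ℝ → ℝ) (θ φ : ℝ) : covNorm 0 ψ θ φ = |ψ θ φ| := by
  simp [covNorm, covIter, sqrt_sq_eq_abs]

theorem abs_pdθ_le_covNorm_one (ψ : ℝ → ℝ → ℝ) (θ φ : ℝ) : |pdθ ψ θ φ| ≤ covNorm 1 ψ θ φ := by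
  have hweight (i : Fin 2) : 0 ≤ sphWeight i θ := by
    unfold sphWeight
    split_ifs <;> positivity
  have hterm := Finset.single_le_sum
    (f := fun I : Fin 1 → Fin 2 => (∏ j, sphWeight (I j) θ) * covIter ψ 1 I θ φ ^ 2)
    (fun I _ => mul_nonneg (Finset.prod_nonneg fun j _ => hweight (I j)) (sq_nonneg _))
    (Finset.mem_univ 0)
  rw [covNorm, ← sqrt_sq_eq_abs]
  refine sqrt_le_sqrt (Eq.trans_le ?_ hterm)
  simp [sphWeight, covIter, covDer, pder2]

namespace CkSphere

variable {k : ℕ} {ψ : ℝ → ℝ → ℝ}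

theorem exists_abs_le (h : CkSphere k ψ) : ∃ C, ∀ θ ∈ Ioo 0 π, ∀ φ, |ψ θ φ| ≤ C :=
  h.2.2.imp fun _ hC θ hθ φ => covNorm_zero ψ θ φ ▸ hC 0 k.zero_le θ hθ φ

theorem tendstoUniformly_zero (h : CkSphere k ψ) (hk : k ≠ 0) {c : ℝ} [(𝓝[Ioo 0 π] c).NeBot]
    (hlim : ∀ φ, Tendsto (fun θ => ψ θ φ) (𝓝[Ioo 0 π] c) (𝓝 0)) :
    TendstoUniformly ψ 0 (𝓝[Ioo 0 π] c) := by
  obtain ⟨C, hC⟩ := h.2.2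
  exact tendstoUniformly_zero_of_norm_deriv_le (convex_Ioo 0 π)
    (fun φ θ hθ => differentiableAt_slice_left h.1 (by exact_mod_cast hk) hθ φ)
    (fun φ θ hθ => (abs_pdθ_le_covNorm_one ψ θ φ).trans (hC 1 (Nat.one_le_iff_ne_zero.2 hk) θ hθ φ))
    hlim

theorem tendstoUniformly_zero_north (h : CkSphere k ψ) (hk : k ≠ 0)
    (hlim : ∀ φ, Tendsto (fun θ => ψ θ φ) (𝓝[>] 0) (𝓝 0)) : TendstoUniformly ψ 0 (𝓝[>] 0) := by
  rw [← nhdsWithin_Ioo_eq_nhdsGT pi_pos] at *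
  have := left_nhdsWithin_Ioo_neBot pi_pos
  exact h.tendstoUniformly_zero hk hlim

theorem tendstoUniformly_zero_south (h : CkSphere k ψ) (hk : k ≠ 0)
    (hlim : ∀ φ, Tendsto (fun θ => ψ θ φ) (𝓝[<] π) (𝓝 0)) : TendstoUniformly ψ 0 (𝓝[<] π) := by
  rw [← nhdsWithin_Ioo_eq_nhdsLT pi_pos] at *
  have := right_nhdsWithin_Ioo_neBot pi_pos
  exact h.tendstoUniformly_zero hk hlim

end CkSphere

/-- Proposition `prop:kerr-kernel`: the kernel of the linearized
harmonic map operator at `(u_{a,b}, v_{a,b})` is one-dimensional, generated by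
`(∂_b u_{a,b}, ∂_b v_{a,b})`. -/
theorem statement_2
    (a b : ℝ) (ha : 0 < a) (hb : b ∈ Ioo (-1 : ℝ) 1)
    (ψ₁ ψ₂ : ℝ → ℝ → ℝ)
    (hC1 : CkSphere 2 ψ₁) (hC2 : CkSphere 2 ψ₂)
    (hzeroN : ∀ φ : ℝ, Tendsto (fun θ => ψ₂ θ φ) (nhdsWithin 0 (Ioi 0)) (nhds 0))
    (hzeroS : ∀ φ : ℝ, Tendsto (fun θ => ψ₂ θ φ) (nhdsWithin π (Iio π)) (nhds 0))
    (hint : IntegrableOn (fun p : ℝ × ℝ =>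
        Real.exp (4 * uab a b p.1) *
          (gradNormSqS2 ψ₂ p.1 p.2 + (ψ₂ p.1 p.2) ^ 2) * Real.sin p.1)
        (Ioo 0 π ×ˢ Ioo 0 (2 * π)) volume)
    (heq1 : ∀ θ ∈ Ioo (0 : ℝ) π, ∀ φ : ℝ,
      lapS2 ψ₁ θ φ
        - 8 * Real.exp (4 * uab a b θ) *
            gradNormSqS2 (fun θ' _ => vab a b θ') θ φ * ψ₁ θ φ
        - 4 * Real.exp (4 * uab a b θ) *
            gradDotS2 (fun θ' _ => vab a b θ') ψ₂ θ φ = 0)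
    (heq2 : ∀ θ ∈ Ioo (0 : ℝ) π, ∀ φ : ℝ,
      lapS2 ψ₂ θ φ
        + 4 * gradDotS2 (fun θ' _ => uab a b θ') ψ₂ θ φ
        + 4 * gradDotS2 (fun θ' _ => vab a b θ') ψ₁ θ φ = 0) :
    ∃ lam : ℝ, ∀ θ ∈ Ioo (0 : ℝ) π, ∀ φ : ℝ,
      ψ₁ θ φ = lam * (b / (2 * (1 - b ^ 2))
          + Real.cos θ / (1 + Real.cos θ ^ 2 + 2 * b * Real.cos θ)) ∧
      ψ₂ θ φ = lam * a * Real.sin θ ^ 4 /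
          (1 + Real.cos θ ^ 2 + 2 * b * Real.cos θ) ^ 2 :=
  statement_2_general ha hb hC1.1 hC2.1 hC1.exists_abs_le hC2.exists_abs_le
    (hC2.tendstoUniformly_zero_north two_ne_zero hzeroN)
    (hC2.tendstoUniformly_zero_south two_ne_zero hzeroS) ⟨heq1, heq2⟩
end
end
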